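/- arXiv:math/0602587 — 2 statements merged into one kernel-verified Lean document; each statement's English description precedes it below -/
import Mathlib

section
/- Let (Ω, ℋ) be a measurable space and F : Ω → 𝒫(ℝ^d) a set-valued map with measurable graph (gr F ∈ ℋ ⊗ ℬ(ℝ^d), where the probability space is complete). Then any ℋ-measurable selector f of the map ω ↦ conv(F(ω)) admits an ℋ-measurable Carathéodory representation: there exist ℋ-measurable selectors g_1, …, g_{d+1} of F and ℋ-measurable functions α_1, …, α_{d+1} ≥ 0 with Σ α_k = 1 such that f = Σ_{k=1}^{d+1} α_k g_k almost surely. -/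
open MeasureTheory

open Set in
lemma aux_compact_sel {Y C : Type*} [TopologicalSpace Y] [TopologicalSpace.MetrizableSpace Y]
    [MeasurableSpace Y] [BorelSpace Y] [Nonempty Y]
    [TopologicalSpace C] [T2Space C] [MeasurableSpace C] [BorelSpace C]
    (p : Y → C) (hp : Continuous p) (K : Set Y) (hK : IsCompact K) :
    ∃ s : C → Y, Measurable s ∧ ∀ c ∈ p '' K, p (s c) = c := by
  classical
  rcases K.eq_empty_or_nonempty with rfl | hne
  · exact ⟨fun _ => Classical.arbitrary Y, measurable_const, by simp⟩
  let := TopologicalSpace.metrizableSpaceMetric Y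
  have : Nonempty K := hne.to_subtype
  have : CompactSpace K := isCompact_iff_compactSpace.1 hK
  obtain ⟨q0, hq0, hq0s⟩ := exists_nat_bool_continuous_surjective_of_compact K
  let q : cantorSet → Y := fun t => (q0 (cantorSetHomeomorphNatToBool t) : Y)
  have hq : Continuous q :=
    continuous_subtype_val.comp (hq0.comp cantorSetHomeomorphNatToBool.continuous)
  let S : C → Set ℝ := fun c => insert 2 ((↑) '' {t : cantorSet | p (q t) = c})
  have hScl : ∀ c, IsClosed (S c) := by
    intro c
    have h1 : IsClosed {t : cantorSet | p (q t) = c} :=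
      isClosed_singleton.preimage (hp.comp hq)
    have h2 : IsClosed ((↑) '' {t : cantorSet | p (q t) = c} : Set ℝ) :=
      isClosed_cantorSet.isClosedEmbedding_subtypeVal.isClosedMap _ h1
    exact (isClosed_singleton (x := (2:ℝ))).union h2
  have hSne : ∀ c, (S c).Nonempty := fun c => ⟨2, mem_insert _ _⟩
  have hSb : ∀ c, BddBelow (S c) := by
    intro c
    refine ⟨0, ?_⟩
    rintro x (rfl | ⟨t, _, rfl⟩)
    · norm_num
    · exact (cantorSet_subset_unitInterval t.2).1
  let r : C → ℝ := fun c => sInf (S c)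
  have hrm : ∀ c, r c ∈ S c := fun c => (hScl c).csInf_mem (hSne c) (hSb c)
  have hr : Measurable r := by
    refine measurable_of_Iic fun a => ?_
    have : r ⁻¹' Iic a = ((p ∘ q) '' {t : cantorSet | (t : ℝ) ≤ a}) ∪ {c | 2 ≤ a} := by
      ext c
      constructor
      · intro h
        rcases hrm c with h2 | ⟨t, ht, htr⟩
        · right
          have : r c ≤ a := h
          rw [h2] at this
          exact this
        · left
          refine ⟨t, ?_, ht⟩
          have : r c ≤ a := h
          rw [← htr] at this
          exact this
      · rintro (⟨t, ht, rfl⟩ | h)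
        · exact (csInf_le (hSb _) (mem_insert_of_mem _ ⟨t, rfl, rfl⟩)).trans ht
        · exact (csInf_le (hSb _) (mem_insert _ _)).trans h
    rw [this]
    have : CompactSpace cantorSet := isCompact_iff_compactSpace.1 isCompact_cantorSet
    refine MeasurableSet.union ?_ (MeasurableSet.const _)
    have hc : IsClosed {t : cantorSet | (t : ℝ) ≤ a} :=
      isClosed_Iic.preimage continuous_subtype_val
    exact (hc.isCompact.image (hp.comp hq)).isClosed.measurableSet
  let q' : ℝ → Y := fun t => if h : t ∈ cantorSet then q ⟨t, h⟩ else Classical.arbitrary Y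
  have hq' : Measurable q' :=
    Measurable.dite (s := cantorSet) hq.measurable measurable_const
      isClosed_cantorSet.measurableSet
  refine ⟨fun c => q' (r c), hq'.comp hr, ?_⟩
  rintro c ⟨y, hy, rfl⟩
  obtain ⟨b, hb⟩ := hq0s ⟨y, hy⟩
  let t : cantorSet := cantorSetHomeomorphNatToBool.symm b
  have hqt : q t = y := by simp [q, t, hb]
  have hrle : r (p y) ≤ t :=
    csInf_le (hSb _) (mem_insert_of_mem _ ⟨t, by simp [hqt], rfl⟩)
  rcases hrm (p y) with h2 | ⟨t', ht', htr⟩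
  · have := (cantorSet_subset_unitInterval t.2).2
    rw [h2] at hrle
    linarith
  · have : q' (r (p y)) = q t' := by
      rw [← htr]
      simp [q']
    exact (congrArg p this).trans ht'

open Set in
lemma aux_capacity {C : Type*} [TopologicalSpace C] [T2Space C] [MeasurableSpace C] [BorelSpace C]
    (ν : Measure C) [ν.OuterRegular] (p : (ℕ → ℕ) → C) (hp : Continuous p)
    (c : ENNReal) (hc : c < ν (range p)) :
    ∃ K : Set (ℕ → ℕ), IsCompact K ∧ c ≤ ν (p '' K) := by
  have step : ∀ (n : ℕ) (B : Set (ℕ → ℕ)), ∃ j : ℕ, c < ν (p '' B) →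
      c < ν (p '' (B ∩ {x | x n ≤ j})) := by
    intro n B
    by_cases h : c < ν (p '' B)
    · have hU : p '' B = ⋃ j : ℕ, p '' (B ∩ {x | x n ≤ j}) := by
        rw [← image_iUnion, ← inter_iUnion]
        congr 1
        symm
        rw [inter_eq_left]
        intro x _
        exact mem_iUnion.2 ⟨x n, le_refl (x n)⟩
      have hm : Monotone fun j : ℕ => p '' (B ∩ {x | x n ≤ j}) := by
        intro i j hij
        exact image_mono (inter_subset_inter_right _ fun x hx => le_trans hx hij)
      rw [hU, hm.measure_iUnion, lt_iSup_iff] at h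
      obtain ⟨j, hj⟩ := h
      exact ⟨j, fun _ => hj⟩
    · exact ⟨0, fun h' => absurd h' h⟩
  choose J hJ using step
  let B : ℕ → Set (ℕ → ℕ) := fun n => Nat.rec univ (fun n B => B ∩ {x | x n ≤ J n B}) n
  have hB0 : B 0 = univ := rfl
  have hBs : ∀ n, B (n+1) = B n ∩ {x | x n ≤ J n (B n)} := fun n => rfl
  have hBc : ∀ n, c < ν (p '' B n) := by
    intro n
    induction n with
    | zero => rwa [hB0, image_univ]
    | succ n ih => rw [hBs]; exact hJ n _ ih
  let m : ℕ → ℕ := fun n => J n (B n)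
  have hBm : ∀ n x, x ∈ B n → ∀ i < n, x i ≤ m i := by
    intro n
    induction n with
    | zero => intro x _ i hi; omega
    | succ n ih =>
      intro x hx i hi
      rw [hBs] at hx
      rcases Nat.lt_succ_iff_lt_or_eq.1 hi with h | rfl
      · exact ih x hx.1 i h
      · exact hx.2
  let K : Set (ℕ → ℕ) := Set.pi univ fun i => Iic (m i)
  have hK : IsCompact K := isCompact_univ_pi fun i => (finite_Iic (m i)).isCompact
  refine ⟨K, hK, ?_⟩
  by_contra hlt
  push Not at hlt
  obtain ⟨U, hKU, hUo, hU⟩ := (p '' K).exists_isOpen_lt_of_lt c hlt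
  let : MetricSpace (ℕ → ℕ) := PiNat.metricSpaceNatNat
  obtain ⟨δ, hδ, hth⟩ := hK.exists_thickening_subset_open (hUo.preimage hp)
    (image_subset_iff.1 hKU)
  obtain ⟨n, hn⟩ := exists_pow_lt_of_lt_one hδ (by norm_num : (1/2 : ℝ) < 1)
  have hsub : p '' B n ⊆ U := by
    rintro _ ⟨x, hx, rfl⟩
    apply hth
    rw [Metric.mem_thickening_iff]
    refine ⟨fun i => min (x i) (m i), fun i _ => mem_Iic.2 (min_le_right _ _), ?_⟩
    refine lt_of_le_of_lt ?_ hn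
    have : x ∈ PiNat.cylinder (fun i => min (x i) (m i)) n := by
      rw [PiNat.mem_cylinder_iff]
      intro i hi
      exact (min_eq_left (hBm n x hx i hi)).symm
    exact PiNat.mem_cylinder_iff_dist_le.1 this
  exact absurd ((hBc n).trans_le (measure_mono hsub)) (not_lt.2 hU.le)

open Set in
lemma aux_analytic_sel {C : Type*} [TopologicalSpace C] [T2Space C]
    [MeasurableSpace C] [BorelSpace C]
    (ν : Measure C) [IsFiniteMeasure ν] [ν.OuterRegular] (p : (ℕ → ℕ) → C) (hp : Continuous p) :
    ∃ s : C → (ℕ → ℕ), Measurable s ∧ ∀ᵐ c ∂ν, c ∈ range p → p (s c) = c := by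
  rcases eq_or_ne (ν (range p)) 0 with h0 | h0
  · refine ⟨fun _ _ => 0, measurable_const, ?_⟩
    have : ∀ᵐ c ∂ν, c ∉ range p := measure_eq_zero_iff_ae_notMem.1 h0
    filter_upwards [this] with c hc h using absurd h hc
  obtain ⟨u, -, hu, hlim⟩ := exists_seq_strictMono_tendsto' (pos_iff_ne_zero.2 h0)
  choose K hK hKu using fun n => aux_capacity ν p hp (u n) (hu n).2
  choose s hs hsK using fun n => aux_compact_sel p hp (K n) (hK n)
  have hDm : ∀ n, MeasurableSet (p '' K n) := fun n => ((hK n).image hp).isClosed.measurableSet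
  obtain ⟨g, hg, hgs⟩ := exists_measurable_piecewise (disjointed fun n => p '' K n)
    (fun n => MeasurableSet.disjointed hDm n) s hs (by
      intro i j hij x hx
      exact absurd hx.2 (disjoint_left.1 (disjoint_disjointed _ hij) hx.1))
  refine ⟨g, hg, ?_⟩
  have hnull : ν (range p \ ⋃ n, p '' K n) = 0 := by
    have hM : MeasurableSet (⋃ n, p '' K n) := MeasurableSet.iUnion hDm
    have hsub : (⋃ n, p '' K n) ⊆ range p := iUnion_subset fun n => image_subset_range _ _
    have hge : ν (range p) ≤ ν (⋃ n, p '' K n) :=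
      le_of_tendsto' hlim fun n => (hKu n).trans (measure_mono (subset_iUnion (fun n => p '' K n) n))
    rw [measure_sdiff hsub hM.nullMeasurableSet (measure_ne_top _ _)]
    exact tsub_eq_zero_of_le hge
  filter_upwards [measure_eq_zero_iff_ae_notMem.1 hnull] with c hc hcr
  have : c ∈ ⋃ n, p '' K n := by
    by_contra h
    exact hc ⟨hcr, h⟩
  rw [← iUnion_disjointed] at this
  obtain ⟨n, hn⟩ := mem_iUnion.1 this
  rw [hgs n hn]
  exact hsK n c (disjointed_subset (fun n => p '' K n) n hn)

open Set in
lemma aux_reduce {Ω X : Type*} [MeasurableSpace Ω] [MeasurableSpace X] (G : Set (Ω × X))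
    (hG : MeasurableSet G) :
    ∃ (φ : Ω → ℕ → Bool) (G' : Set ((ℕ → Bool) × X)), Measurable φ ∧ MeasurableSet G' ∧
      G = {z | (φ z.1, z.2) ∈ G'} := by
  classical
  rw [← generateFrom_prod] at hG
  induction hG with
  | basic u hu =>
    obtain ⟨A, hA, B, hB, rfl⟩ := hu
    refine ⟨fun ω _ => decide (ω ∈ A), {z | z.1 0 = true ∧ z.2 ∈ B}, ?_, ?_, ?_⟩
    · refine measurable_pi_lambda _ fun _ => ?_
      refine measurable_to_bool ?_
      have : (fun ω => decide (ω ∈ A)) ⁻¹' {true} = A := by ext; simp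
      rw [this]
      exact hA
    · refine MeasurableSet.inter ?_ (measurable_snd hB)
      have h0 : Measurable fun z : (ℕ → Bool) × X => z.1 0 :=
        (measurable_pi_apply 0).comp measurable_fst
      exact h0 (measurableSet_singleton true)
    · ext z
      simp [mem_prod]
  | empty => exact ⟨fun _ _ => true, ∅, measurable_const, .empty, by simp⟩
  | compl t _ ih =>
    obtain ⟨φ, G', h1, h2, h3⟩ := ih
    exact ⟨φ, G'ᶜ, h1, h2.compl, by rw [h3]; rfl⟩
  | iUnion f _ ih =>
    choose φ G' h1 h2 h3 using ih
    refine ⟨fun ω n => φ n.unpair.1 ω n.unpair.2,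
      ⋃ n, {z | ((fun k => z.1 (Nat.pair n k)), z.2) ∈ G' n}, ?_, ?_, ?_⟩
    · exact measurable_pi_lambda _ fun n => (measurable_pi_apply _).comp (h1 _)
    · refine MeasurableSet.iUnion fun n => ?_
      refine Measurable.prodMk (measurable_pi_lambda _ fun k => ?_) measurable_snd (h2 n)
      exact (measurable_pi_apply _).comp measurable_fst
    · ext z
      simp only [mem_iUnion, mem_ofPred_eq, Nat.unpair_pair]
      refine exists_congr fun n => ?_
      rw [h3 n]
      rfl

instance aux_polish_cantor : PolishSpace (ℕ→Bool) := by
  have h : TopologicalSpace.IsCompletelyMetrizableSpace Bool := (inferInstance : PolishSpace Bool).2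
  have h1 : SecondCountableTopology (ℕ → Bool) := inferInstance
  have h2 : TopologicalSpace.IsCompletelyMetrizableSpace (ℕ → Bool) := TopologicalSpace.IsCompletelyMetrizableSpace.pi_countable
  exact PolishSpace.mk

open Set in
lemma aux_selection {Ω X : Type*} [MeasurableSpace Ω] (μ : Measure Ω) [IsFiniteMeasure μ]
    [TopologicalSpace X] [PolishSpace X] [MeasurableSpace X] [BorelSpace X] [Nonempty X]
    (G : Set (Ω × X)) (hG : MeasurableSet G) :
    ∃ s : Ω → X, Measurable s ∧ ∀ᵐ ω ∂μ, (∃ x, (ω, x) ∈ G) → (ω, s ω) ∈ G := by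
  obtain ⟨φ, G', hφ, hG', rfl⟩ := aux_reduce G hG
  have hA := hG'.analyticSet
  rw [AnalyticSet] at hA
  rcases hA with rfl | ⟨h, hh, rfl⟩
  · exact ⟨fun _ => Classical.arbitrary X, measurable_const, by simp⟩
  obtain ⟨s, hs, hsae⟩ := aux_analytic_sel (μ.map φ) (fun x => (h x).1) hh.fst
  refine ⟨fun ω => (h (s (φ ω))).2, hh.snd.measurable.comp (hs.comp hφ), ?_⟩
  filter_upwards [ae_of_ae_map hφ.aemeasurable hsae] with ω hω
  rintro ⟨x, y, hy⟩
  have := hω ⟨y, by simp [hy]⟩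
  exact ⟨s (φ ω), Prod.ext this rfl⟩

/-- Coefficients and points. -/
abbrev AuxX (d : ℕ) : Type := (Fin (d+1) → ℝ) × (Fin (d+1) → EuclideanSpace ℝ (Fin d))

lemma aux_caratheodory {d : ℕ} (s : Set (EuclideanSpace ℝ (Fin d))) (x : EuclideanSpace ℝ (Fin d))
    (hx : x ∈ convexHull ℝ s) :
    ∃ (a : Fin (d + 1) → ℝ) (y : Fin (d + 1) → EuclideanSpace ℝ (Fin d)),
      (∀ k, 0 ≤ a k) ∧ ∑ k, a k = 1 ∧ (∀ k, y k ∈ s) ∧ x = ∑ k, a k • y k := by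
  classical
  obtain ⟨y0, hy0⟩ : s.Nonempty := convexHull_nonempty_iff.1 ⟨x, hx⟩
  obtain ⟨ι, _, z, w, hz, hai, hw, hw1, hwx⟩ := eq_pos_convex_span_of_mem_convexHull hx
  have hcard : Fintype.card ι ≤ Fintype.card (Fin (d+1)) := by
    have := hai.card_le_finrank_succ
    have h2 := Submodule.finrank_le (vectorSpan ℝ (Set.range z))
    rw [finrank_euclideanSpace_fin] at h2
    rw [Fintype.card_fin]
    omega
  obtain ⟨e⟩ := Function.Embedding.nonempty_of_card_le hcard
  refine ⟨Function.extend e w 0, Function.extend e z fun _ => y0, ?_, ?_, ?_, ?_⟩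
  · intro k
    by_cases h : ∃ i, e i = k
    · obtain ⟨i, rfl⟩ := h
      rw [e.injective.extend_apply]
      exact (hw i).le
    · rw [Function.extend_apply' _ _ _ h]; simp
  · rw [← hw1]
    symm
    refine Fintype.sum_of_injective e e.injective _ _ ?_ ?_
    · intro k hk
      rw [Function.extend_apply' _ _ _ hk]; rfl
    · intro i; rw [e.injective.extend_apply]
  · intro k
    by_cases h : ∃ i, e i = k
    · obtain ⟨i, rfl⟩ := h
      rw [e.injective.extend_apply]
      exact hz ⟨i, rfl⟩
    · rw [Function.extend_apply' _ _ _ h]; exact hy0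
  · rw [← hwx]
    refine Fintype.sum_of_injective e e.injective _ _ ?_ ?_
    · intro k hk
      rw [Function.extend_apply' _ _ _ hk]; simp
    · intro i; rw [e.injective.extend_apply, e.injective.extend_apply]

/-- Measurable Carathéodory representation: if `F : Ω → 𝒫(ℝ^d)` has measurable graph
(on a complete probability space), then any measurable selector `f` of `ω ↦ conv (F ω)`
can be written a.s. as `f = ∑_{k=1}^{d+1} α k • g k` with measurable selectors `g k` of `F`
and measurable coefficients `α k ≥ 0`, `∑ α k = 1`. -/
theorem measurable_caratheodory_representation
    {Ω : Type*} {ℋ : MeasurableSpace Ω} {μ : Measure Ω} [IsProbabilityMeasure μ]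
    [μ.IsComplete] {d : ℕ}
    (F : Ω → Set (EuclideanSpace ℝ (Fin d)))
    (hgr : MeasurableSet {p : Ω × EuclideanSpace ℝ (Fin d) | p.2 ∈ F p.1})
    (f : Ω → EuclideanSpace ℝ (Fin d)) (hfmeas : Measurable f)
    (hfsel : ∀ ω, (F ω).Nonempty → f ω ∈ convexHull ℝ (F ω)) :
    ∃ (g : Fin (d + 1) → Ω → EuclideanSpace ℝ (Fin d)) (α : Fin (d + 1) → Ω → ℝ),
      (∀ k, Measurable (g k)) ∧
      (∀ k ω, (F ω).Nonempty → g k ω ∈ F ω) ∧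
      (∀ k, Measurable (α k)) ∧
      (∀ k ω, 0 ≤ α k ω) ∧
      (∀ ω, ∑ k, α k ω = 1) ∧
      (∀ᵐ ω ∂μ, f ω = ∑ k, α k ω • g k ω) := by
  classical
  let P : Ω → AuxX d → Prop := fun ω z => (∀ k, 0 ≤ z.1 k) ∧ ∑ k, z.1 k = 1 ∧
    f ω = ∑ k, z.1 k • z.2 k
  let G : Set (Ω × AuxX d) := {q | P q.1 q.2 ∧ ∀ k, q.2.2 k ∈ F q.1}
  have ha : ∀ k, Measurable fun q : Ω × AuxX d => q.2.1 k := fun k => by fun_prop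
  have hy : ∀ k, Measurable fun q : Ω × AuxX d => q.2.2 k := fun k => by fun_prop
  have hG : MeasurableSet G := by
    have e1 : MeasurableSet {q : Ω × AuxX d | ∀ k, 0 ≤ q.2.1 k} := by
      simp only [Set.ofPred_forall]
      exact MeasurableSet.iInter fun k => measurableSet_le measurable_const (ha k)
    have e2 : MeasurableSet {q : Ω × AuxX d | ∀ k, q.2.2 k ∈ F q.1} := by
      simp only [Set.ofPred_forall]
      exact MeasurableSet.iInter fun k => (measurable_fst.prodMk (hy k)) hgr
    refine MeasurableSet.inter (e1.inter (MeasurableSet.inter ?_ ?_)) e2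
    · exact measurableSet_eq_fun (Finset.measurable_sum _ fun k _ => ha k) measurable_const
    · exact measurableSet_eq_fun (hfmeas.comp measurable_fst)
        (Finset.measurable_sum _ fun k _ => (ha k).smul (hy k))
  obtain ⟨s, hs, hsae⟩ := aux_selection μ G hG
  let z0 : Ω → AuxX d := fun ω => (fun k => if k = 0 then 1 else 0, fun _ => f ω)
  have hz0 : Measurable z0 :=
    measurable_const.prodMk (measurable_pi_lambda _ fun _ => hfmeas)
  have hz0P : ∀ ω, P ω (z0 ω) := by
    intro ω
    refine ⟨fun k => ?_, ?_, ?_⟩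
    · simp only [z0]; split_ifs <;> norm_num
    · simp [z0]
    · simp [z0, ite_smul]
  let t : Ω → AuxX d := fun ω => if (ω, s ω) ∈ G then s ω else z0 ω
  have ht : Measurable t := Measurable.ite ((measurable_id.prodMk hs) hG) hs hz0
  have key : ∀ ω, ∃ z : AuxX d, P ω z ∧ ((F ω).Nonempty → ∀ k, z.2 k ∈ F ω) ∧
      (((∃ x, (ω, x) ∈ G) → (ω, s ω) ∈ G) → z = t ω) := by
    intro ω
    by_cases h1 : (ω, s ω) ∈ G
    · exact ⟨s ω, h1.1, fun _ => h1.2, fun _ => by simp [t, h1]⟩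
    by_cases h2 : (F ω).Nonempty
    · obtain ⟨a, y, h0, hsum, hyF, hxy⟩ := aux_caratheodory (F ω) (f ω) (hfsel ω h2)
      have hz : (ω, ((a, y) : AuxX d)) ∈ G := ⟨⟨h0, hsum, hxy⟩, hyF⟩
      exact ⟨(a, y), hz.1, fun _ => hyF, fun h => absurd (h ⟨_, hz⟩) h1⟩
    · exact ⟨z0 ω, hz0P ω, fun h => absurd h h2, fun _ => by simp [t, h1]⟩
  choose u huP huF hut using key
  have hu : Measurable u := by
    refine ht.congr_ae (μ := μ) ?_
    filter_upwards [hsae] with ω hω using (hut ω hω).symm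
  refine ⟨fun k ω => (u ω).2 k, fun k ω => (u ω).1 k, ?_, ?_, ?_, ?_, ?_, ?_⟩
  · exact fun k => (measurable_pi_apply k).comp hu.snd
  · exact fun k ω h => huF ω h k
  · exact fun k => (measurable_pi_apply k).comp hu.fst
  · exact fun k ω => (huP ω).1 k
  · exact fun ω => (huP ω).2.1
  · exact Filter.Eventually.of_forall fun ω => (huP ω).2.2
end

section
/- Let (Ω, ℱ, P) be a probability space with filtration (ℱ_n)_{n=0}^N (each ℱ_n complete), and let G_n : Ω → 𝒫(ℝ^d), n = 0,…,N, be ℱ_n-measurable set-valued maps with nonempty relatively open convex values. Define recursively W_N = cl G_N and W_{n-1} = cl(G_{n-1} ∩ ri(conv K(W_n, ℱ_{n-1}))) for 1 ≤ n ≤ N, where K(W_n, ℱ_{n-1}) is the support of the regular conditional upper distribution of W_n given ℱ_{n-1}. Then the following are equivalent: (a) there exist an adapted process (x_n)_{n=0}^N with x_n(ω) ∈ G_n(ω) a.s. for each n and a probability measure Q equivalent to P under which x is a martingale; (b) W_n ≠ ∅ a.s. for n = 0,…,N−1. -/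
open MeasureTheory
open scoped Classical

/-- The space of nonempty closed subsets of `ℝ^d`. -/
def CL (d : ℕ) : Type :=
  {C : Set (EuclideanSpace ℝ (Fin d)) // IsClosed C ∧ C.Nonempty}

/-- The Effros σ-algebra on `CL d`, generated by the sets
`A_V = {D : D ∩ V ≠ ∅}` for open `V`. -/
instance effros (d : ℕ) : MeasurableSpace (CL d) :=
  MeasurableSpace.generateFrom
    {A | ∃ V : Set (EuclideanSpace ℝ (Fin d)), IsOpen V ∧
      A = {D : CL d | (D.1 ∩ V).Nonempty}}

/-- Bundle a set as an element of `CL d`, replacing it by the whole space when it is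
not closed and nonempty (the `F_*` convention of the paper). -/
noncomputable def bundle {d : ℕ} (S : Set (EuclideanSpace ℝ (Fin d))) : CL d :=
  if h : IsClosed S ∧ S.Nonempty then ⟨S, h⟩
  else ⟨Set.univ, isClosed_univ, Set.univ_nonempty⟩

open MeasureTheory
open scoped Classical
set_option linter.unusedSectionVars false
set_option linter.unusedSimpArgs false

section ConvexPart
variable {E : Type*} [NormedAddCommGroup E] [InnerProductSpace ℝ E] [FiniteDimensional ℝ E]

/-- no-arbitrage condition for a set -/
def NAs (C : Set E) (z : E) : Prop :=
  ∀ p : E, (∀ y ∈ C, inner ℝ p (y - z) ≤ 0) → ∀ y ∈ C, inner ℝ p (y - z) = 0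

/-- no-arbitrage condition for a measure -/
def NAm [MeasurableSpace E] (ν : Measure E) (z : E) : Prop :=
  ∀ p : E, (∀ᵐ y ∂ν, inner ℝ p (y - z) ≤ 0) → ∀ᵐ y ∂ν, inner ℝ p (y - z) = 0

lemma mem_ri_iff {C : Set E} {z : E} : z ∈ intrinsicInterior ℝ C ↔
    z ∈ affineSpan ℝ C ∧ ∃ δ > 0, ∀ y ∈ affineSpan ℝ C, dist y z < δ → y ∈ C := by
  rw [mem_intrinsicInterior]
  constructor
  · rintro ⟨y, hy, rfl⟩
    refine ⟨y.2, ?_⟩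
    rw [mem_interior_iff_mem_nhds, Metric.mem_nhds_iff] at hy
    obtain ⟨δ, hδ, h⟩ := hy
    exact ⟨δ, hδ, fun w hw hd => @h ⟨w, hw⟩ hd⟩
  · rintro ⟨hz, δ, hδ, h⟩
    refine ⟨⟨z, hz⟩, ?_, rfl⟩
    rw [mem_interior_iff_mem_nhds, Metric.mem_nhds_iff]
    exact ⟨δ, hδ, fun w hw => h w.1 w.2 hw⟩

lemma ri_ext {C : Set E} {z y : E} (hz : z ∈ intrinsicInterior ℝ C) (hy : y ∈ C) :
    ∃ ε > 0, ∀ t : ℝ, 0 < t → t ≤ ε → z + t • (z - y) ∈ intrinsicInterior ℝ C := by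
  rw [mem_ri_iff] at hz
  obtain ⟨hz, δ, hδ, h⟩ := hz
  have hya : y ∈ affineSpan ℝ C := subset_affineSpan ℝ C hy
  have hmem : ∀ t : ℝ, z + t • (z - y) ∈ affineSpan ℝ C := by
    intro t
    have := AffineSubspace.vadd_mem_of_mem_direction (s := affineSpan ℝ C)
      (Submodule.smul_mem _ t (AffineSubspace.vsub_mem_direction hz hya)) hz
    simpa [vsub_eq_sub, vadd_eq_add, add_comm] using this
  refine ⟨δ / 2 / (1 + ‖z - y‖), by positivity, fun t ht hte => ?_⟩
  have hd : dist (z + t • (z - y)) z ≤ δ / 2 := by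
    rw [dist_eq_norm]
    simp only [add_sub_cancel_left, norm_smul, Real.norm_eq_abs, abs_of_pos ht]
    rw [le_div_iff₀ (by positivity)] at hte
    nlinarith [norm_nonneg (z - y)]
  rw [mem_ri_iff]
  refine ⟨hmem t, δ / 2, by positivity, fun w hw hwd => h w hw ?_⟩
  linarith [dist_triangle w (z + t • (z - y)) z]

lemma NAs_of_ext {C : Set E} {z : E}
    (h : ∀ y ∈ C, ∃ t : ℝ, 0 < t ∧ z + t • (z - y) ∈ C) : NAs C z := by
  intro p hp y hy
  obtain ⟨t, ht, hm⟩ := h y hy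
  have h1 := hp _ hm
  have h2 := hp _ hy
  have : z + t • (z - y) - z = (-t) • (y - z) := by module
  rw [this, inner_smul_right] at h1
  nlinarith

lemma NAs_of_mem_ri {C : Set E} {z : E} (hz : z ∈ intrinsicInterior ℝ C) : NAs C z := by
  refine NAs_of_ext fun y hy => ?_
  obtain ⟨ε, hε, h⟩ := ri_ext hz hy
  exact ⟨ε, hε, intrinsicInterior_subset (h ε hε le_rfl)⟩

/-- `NAs` depends only on the closure. -/
lemma NAs_congr_of_closure {C D : Set E} {z : E} (h : closure C = closure D) (hC : NAs C z) :
    NAs D z := by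
  intro p hp
  have cl : ∀ y ∈ closure D, inner ℝ p (y - z) ≤ 0 := by
    have : closure D ⊆ {y | inner ℝ p (y - z) ≤ 0} :=
      closure_minimal hp (isClosed_le (by fun_prop) continuous_const)
    exact this
  have h1 := hC p (fun y hy => cl y (h ▸ subset_closure hy))
  have h2 : closure C ⊆ {y | inner ℝ p (y - z) = 0} :=
      closure_minimal h1 (isClosed_eq (by fun_prop) continuous_const)
  exact fun y hy => h2 (h ▸ subset_closure hy)

lemma NAs_convexHull {C : Set E} {z : E} (hC : NAs C z) : NAs (convexHull ℝ C) z := by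
  intro p hp
  have h1 := hC p (fun y hy => hp y (subset_convexHull ℝ C hy))
  have : convexHull ℝ C ⊆ {y | inner ℝ p (y - z) = 0} := by
    refine convexHull_min h1 ?_
    intro x hx y hy a b ha hb hab
    simp only [Set.mem_ofPred_eq] at *
    have : a • x + b • y - z = a • (x - z) + b • (y - z) := by
      have : z = (a + b) • z := by rw [hab, one_smul]
      nth_rewrite 1 [this]; module
    rw [this, inner_add_right, inner_smul_right, inner_smul_right, hx, hy]; simp
  exact this

lemma NAs_of_convexHull {C : Set E} {z : E} (hC : NAs (convexHull ℝ C) z) : NAs C z := by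
  intro p hp y hy
  refine hC p ?_ y (subset_convexHull ℝ C hy)
  have : convexHull ℝ C ⊆ {y | inner ℝ p (y - z) ≤ 0} := by
    refine convexHull_min hp ?_
    intro x hx y hy a b ha hb hab
    simp only [Set.mem_ofPred_eq] at *
    have : a • x + b • y - z = a • (x - z) + b • (y - z) := by
      have : z = (a + b) • z := by rw [hab, one_smul]
      nth_rewrite 1 [this]; module
    rw [this, inner_add_right, inner_smul_right, inner_smul_right]
    nlinarith
  exact this

/-- proper separation -/
lemma mem_ri_of_NAs {C : Set E} {z : E} (hc : Convex ℝ C) (hne : C.Nonempty) (h : NAs C z) :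
    z ∈ intrinsicInterior ℝ C := by
  -- first `z` is in the closure
  have hcl : z ∈ closure C := by
    by_contra hz
    obtain ⟨f, u, hfu, hfz⟩ := geometric_hahn_banach_closed_point hc.closure isClosed_closure hz
    set p := (InnerProductSpace.toDual ℝ E).symm f with hp
    have hpf : ∀ y, inner ℝ p y = f y := fun y => by simp [hp]
    obtain ⟨y, hy⟩ := hne
    have h1 : ∀ y ∈ C, inner ℝ p (y - z) < 0 := fun y hy => by
      rw [hpf, map_sub]; linarith [hfu y (subset_closure hy)]
    have := h p (fun y hy => (h1 y hy).le) y hy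
    linarith [h1 y hy]
  have hza : z ∈ affineSpan ℝ C := by
    have : closure C ⊆ (affineSpan ℝ C : Set E) :=
      closure_minimal (subset_affineSpan ℝ C) (AffineSubspace.closed_of_finiteDimensional _)
    exact this hcl
  obtain ⟨m, hm⟩ := hne.intrinsicInterior hc
  have hm' := hm
  rw [mem_ri_iff] at hm'
  obtain ⟨hma, δ, hδ, hmb⟩ := hm'
  let V := (affineSpan ℝ C).direction
  let C' : Set V := {v | z + (v : E) ∈ C}
  have hVmem : ∀ v : V, z + (v : E) ∈ affineSpan ℝ C := fun v => by
    have := AffineSubspace.vadd_mem_of_mem_direction (s := affineSpan ℝ C) v.2 hza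
    simpa [vadd_eq_add, add_comm] using this
  have hsub : ∀ y ∈ affineSpan ℝ C, y - z ∈ V := fun y hy =>
    AffineSubspace.vsub_mem_direction hy hza
  have hC' : Convex ℝ C' := by
    intro x hx y hy a b ha hb hab
    have := hc hx hy ha hb hab
    have e : a • (z + (x : E)) + b • (z + (y : E)) = z + ((a • x + b • y : V) : E) := by
      have : z = (a + b) • z := by rw [hab, one_smul]
      push_cast
      nth_rewrite 3 [this]; module
    rw [e] at this; exact this
  let v0 : V := ⟨m - z, hsub m hma⟩
  have hv0 : v0 ∈ interior C' := by
    rw [mem_interior_iff_mem_nhds, Metric.mem_nhds_iff]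
    refine ⟨δ, hδ, fun w hw => hmb _ (hVmem w) ?_⟩
    have hw' : dist (w : E) (m - z) < δ := hw
    rw [dist_eq_norm] at hw' ⊢
    convert hw' using 2; abel
  by_contra hz
  have h0 : (0 : V) ∉ interior C' := by
    intro h0
    apply hz
    rw [mem_interior_iff_mem_nhds, Metric.mem_nhds_iff] at h0
    obtain ⟨r, hr, hb⟩ := h0
    rw [mem_ri_iff]
    refine ⟨hza, r, hr, fun y hy hyd => ?_⟩
    have : (⟨y - z, hsub y hy⟩ : V) ∈ C' := hb (by
      rw [Metric.mem_ball, dist_eq_norm] at *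
      simpa using hyd)
    simpa [C'] using this
  obtain ⟨f, hf0, hf⟩ := geometric_hahn_banach_of_nonempty_interior_point hC' h0 ⟨v0, hv0⟩
  set q := (InnerProductSpace.toDual ℝ V).symm f with hq
  have hqf : ∀ y, inner ℝ q y = f y := fun y => by simp [hq]
  have hin : ∀ y (hy : y ∈ affineSpan ℝ C), inner ℝ (q : E) (y - z) = f ⟨y - z, hsub y hy⟩ := by
    intro y hy
    rw [← hqf]; rfl
  have hNA := h (q : E) (fun y hy => by
    rw [hin y (subset_affineSpan ℝ C hy)]
    have := hf ⟨y - z, hsub y (subset_affineSpan ℝ C hy)⟩ (by simpa [C'] using hy)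
    simpa using this)
  have hz0 : ∀ v ∈ C', f v = 0 := by
    intro v hv
    have h1 := hNA _ hv
    rw [hin _ (subset_affineSpan ℝ C hv)] at h1
    simpa using h1
  apply hf0
  ext v
  simp only [zero_apply]
  have hnh : ∀ᶠ t : ℝ in nhds 0, v0 + t • v ∈ C' := by
    have hcont : Filter.Tendsto (fun t : ℝ => v0 + t • v) (nhds 0) (nhds v0) := by
      have : Continuous (fun t : ℝ => v0 + t • v) := by fun_prop
      simpa using this.tendsto 0
    exact hcont (mem_interior_iff_mem_nhds.1 hv0)
  obtain ⟨r, hr, hb⟩ := Metric.eventually_nhds_iff.1 hnh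
  have h1 := hz0 _ (@hb (r / 2) (by simp [abs_of_pos hr, hr]))
  have h2 := hz0 _ (interior_subset hv0)
  rw [map_add, h2, map_smul] at h1
  simp at h1
  rcases h1 with h1 | h1
  · linarith
  · exact h1

end ConvexPart

open MeasureTheory
open scoped Classical
set_option linter.unusedSectionVars false
set_option linter.unusedSimpArgs false

section GaussPart
variable {E : Type*} [NormedAddCommGroup E] [InnerProductSpace ℝ E] [FiniteDimensional ℝ E]
  [MeasurableSpace E] [BorelSpace E]

/-- Gaussian weight -/
noncomputable def gk (q y : E) : ℝ := Real.exp (-‖y - q‖ ^ 2)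

lemma gk_pos (q y : E) : 0 < gk q y := Real.exp_pos _

lemma gk_le_one (q y : E) : gk q y ≤ 1 := by
  unfold gk; rw [Real.exp_le_one_iff]; nlinarith [sq_nonneg ‖y - q‖]

lemma gk_mul_le (q y : E) : gk q y * ‖y - q‖ ≤ 1 := by
  unfold gk
  rw [Real.exp_neg, inv_mul_le_iff₀ (Real.exp_pos _)]
  have := Real.add_one_le_exp (‖y - q‖ ^ 2)
  nlinarith [sq_nonneg (‖y - q‖ - 1)]

lemma continuous_gk : Continuous fun s : E × E => gk s.1 s.2 := by
  unfold gk; fun_prop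

lemma norm_gk_smul_le (q y z : E) : ‖gk q y • (y - z)‖ ≤ 1 + ‖z - q‖ := by
  rw [norm_smul, Real.norm_eq_abs, abs_of_pos (gk_pos q y)]
  have h1 : ‖y - z‖ ≤ ‖y - q‖ + ‖z - q‖ := by
    have : y - z = (y - q) - (z - q) := by abel
    rw [this]; exact norm_sub_le _ _
  nlinarith [gk_pos q y, gk_le_one q y, gk_mul_le q y, norm_nonneg (z - q)]

/-- the Gaussian first moment -/
noncomputable def hG (ν : Measure E) (q z : E) : E := ∫ y, gk q y • (y - z) ∂ν

lemma measurable_gk (q : E) : Measurable (gk q) :=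
  (continuous_gk.comp (Continuous.prodMk_right q)).measurable

lemma integrable_gk (ν : Measure E) [IsFiniteMeasure ν] (q : E) : Integrable (gk q) ν :=
  Integrable.of_bound (measurable_gk q).aestronglyMeasurable 1
    (Filter.Eventually.of_forall fun y => by
      rw [Real.norm_eq_abs, abs_of_pos (gk_pos q y)]; exact gk_le_one q y)

lemma aesm_gk_smul (ν : Measure E) (q z : E) :
    AEStronglyMeasurable (fun y => gk q y • (y - z)) ν :=
  ((measurable_gk q).smul (measurable_id.sub_const z)).aestronglyMeasurable

lemma integrable_gk_smul (ν : Measure E) [IsFiniteMeasure ν] (q z : E) :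
    Integrable (fun y => gk q y • (y - z)) ν :=
  Integrable.of_bound (aesm_gk_smul ν q z) _
    (Filter.Eventually.of_forall fun y => norm_gk_smul_le q y z)

lemma continuous_hG (ν : Measure E) [IsFiniteMeasure ν] :
    Continuous fun s : E × E => hG ν s.1 s.2 := by
  rw [continuous_iff_continuousAt]
  intro s
  unfold hG
  refine continuousAt_of_dominated (bound := fun _ => 1 + (‖s.2 - s.1‖ + 1)) ?_ ?_
    (integrable_const _) ?_
  · exact Filter.Eventually.of_forall fun x => aesm_gk_smul ν _ _
  · have : Continuous fun x : E × E => ‖x.2 - x.1‖ := by fun_prop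
    have := (this.continuousAt (x := s)).eventually_lt
      (continuousAt_const (y := ‖s.2 - s.1‖ + 1)) (by simp)
    filter_upwards [this] with x hx
    refine Filter.Eventually.of_forall fun y => (norm_gk_smul_le _ _ _).trans ?_
    linarith
  · refine Filter.Eventually.of_forall fun y => ?_
    have : Continuous fun x : E × E => gk x.1 y • (y - x.2) := by
      have := continuous_gk (E := E)
      unfold gk
      fun_prop
    exact this.continuousAt

lemma continuous_int_gk (ν : Measure E) [IsFiniteMeasure ν] :
    Continuous fun q : E => ∫ y, gk q y ∂ν := by
  refine continuous_of_dominated (bound := fun _ => 1) ?_ ?_ (integrable_const _) ?_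
  · exact fun x => (measurable_gk x).aestronglyMeasurable
  · refine fun q => Filter.Eventually.of_forall fun y => ?_
    rw [Real.norm_eq_abs, abs_of_pos (gk_pos q y)]; exact gk_le_one q y
  · refine Filter.Eventually.of_forall fun y => ?_
    unfold gk; fun_prop

lemma inner_hG (ν : Measure E) [IsFiniteMeasure ν] (p q z : E) :
    inner ℝ p (hG ν q z) = ∫ y, gk q y * inner ℝ p (y - z) ∂ν := by
  unfold hG
  rw [← integral_inner (integrable_gk_smul ν q z)]
  simp only [inner_smul_right]

lemma integrable_gk_inner (ν : Measure E) [IsFiniteMeasure ν] (p q z : E) :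
    Integrable (fun y => gk q y * inner ℝ p (y - z)) ν := by
  have := (integrable_gk_smul ν q z).const_inner (𝕜 := ℝ) p
  simpa only [inner_smul_right] using this

lemma NAm_of_hG {ν : Measure E} [IsFiniteMeasure ν] {q z : E} (h : hG ν q z = 0) : NAm ν z := by
  intro p hp
  have h1 : ∫ y, -(gk q y * inner ℝ p (y - z)) ∂ν = 0 := by
    rw [integral_neg, ← inner_hG, h, inner_zero_right, neg_zero]
  rw [integral_eq_zero_iff_of_nonneg_ae] at h1
  · filter_upwards [h1] with y hy
    have := gk_pos q y
    simp only [Pi.zero_apply, neg_eq_zero, mul_eq_zero] at hy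
    rcases hy with hy | hy
    · linarith
    · exact hy
  · filter_upwards [hp] with y hy
    have := gk_pos q y
    simp only [Pi.zero_apply]
    nlinarith
  · exact (integrable_gk_inner ν p q z).neg

lemma exp_conv (q h y z : E) (t : ℝ) :
    Real.exp (‖q + t • h‖ ^ 2 - 2 * inner ℝ (q + t • h) z) * gk (q + t • h) y
      - Real.exp (‖q‖ ^ 2 - 2 * inner ℝ q z) * gk q y ≤
    2 * t * (Real.exp (‖q + t • h‖ ^ 2 - 2 * inner ℝ (q + t • h) z) *
      (gk (q + t • h) y * inner ℝ h (y - z))) := by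
  unfold gk
  have key : ∀ r : E, Real.exp (‖r‖ ^ 2 - 2 * inner ℝ r z) * Real.exp (-‖y - r‖ ^ 2) =
      Real.exp (-‖y‖ ^ 2 + 2 * inner ℝ r (y - z)) := by
    intro r
    rw [← Real.exp_add, @norm_sub_sq ℝ, inner_sub_right, real_inner_comm r y]
    congr 1
    simp; ring
  rw [← mul_assoc (Real.exp _) (Real.exp _), key, key]
  have e : -‖y‖ ^ 2 + 2 * inner ℝ q (y - z) =
    (-‖y‖ ^ 2 + 2 * inner ℝ (q + t • h) (y - z)) + (- (2 * t * inner ℝ h (y - z))) := by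
    rw [inner_add_left, inner_smul_left]; simp; ring
  rw [e, Real.exp_add _ (- (2 * t * inner ℝ h (y - z)))]
  have h1 := Real.add_one_le_exp (- (2 * t * inner ℝ h (y - z)))
  have h2 := Real.exp_pos (-‖y‖ ^ 2 + 2 * inner ℝ (q + t • h) (y - z))
  nlinarith

lemma exists_hG_of_NAm {ν : Measure E} [IsFiniteMeasure ν] {z : E} (hNA : NAm ν z) :
    ∃ q, hG ν q z = 0 := by
  let N : Submodule ℝ E :=
    { carrier := {p | ∀ᵐ y ∂ν, inner ℝ p (y - z) = 0}
      add_mem' := by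
        intro a b ha hb
        simp only [Set.mem_ofPred_eq] at *
        filter_upwards [ha, hb] with y h1 h2
        rw [inner_add_left, h1, h2, add_zero]
      zero_mem' := by simp
      smul_mem' := by
        intro c a ha
        simp only [Set.mem_ofPred_eq] at *
        filter_upwards [ha] with y h1
        rw [inner_smul_left, h1, mul_zero] }
  have hN : ∀ p, p ∈ N ↔ ∀ᵐ y ∂ν, inner ℝ p (y - z) = 0 := fun p => Iff.rfl
  let L := Nᗮ
  have hGL : ∀ q, hG ν q z ∈ L := by
    intro q
    rw [Submodule.mem_orthogonal]
    intro p hp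
    rw [inner_hG]
    rw [hN] at hp
    rw [integral_eq_zero_of_ae]
    filter_upwards [hp] with y hy
    simp [hy]
  let Ψ : E → ℝ := fun q => Real.exp (‖q‖ ^ 2 - 2 * inner ℝ q z) * ∫ y, gk q y ∂ν
  have hΨc : Continuous Ψ := by
    have := continuous_int_gk ν
    fun_prop
  have hΨ0 : ∀ q, 0 ≤ Ψ q := fun q =>
    mul_nonneg (Real.exp_pos _).le (integral_nonneg fun y => (gk_pos q y).le)
  -- lower bound
  let c : E → ℝ := fun p => ∫ y, gk 0 y * max (inner ℝ p (y - z)) 0 ∂ν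
  have hci : ∀ p, Integrable (fun y => gk 0 y * max (inner ℝ p (y - z)) 0) ν := by
    intro p
    have := (integrable_gk_inner ν p 0 z).pos_part
    refine this.congr (Filter.Eventually.of_forall fun y => ?_)
    simp only
    rw [mul_max_of_nonneg _ _ (gk_pos 0 y).le, mul_zero]
  have hcc : Continuous c := by
    refine continuous_iff_continuousAt.2 fun p0 => ?_
    refine continuousAt_of_dominated (bound := fun y => (‖p0‖ + 1) * (1 + ‖z - 0‖)) ?_ ?_
      (integrable_const _) ?_
    · exact Filter.Eventually.of_forall fun p => (hci p).aestronglyMeasurable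
    · have := (continuous_norm.continuousAt (x := p0)).eventually_lt
        (continuousAt_const (y := ‖p0‖ + 1)) (by simp)
      filter_upwards [this] with p hp
      refine Filter.Eventually.of_forall fun y => ?_
      have h1 := norm_gk_smul_le 0 y z
      rw [norm_smul, Real.norm_eq_abs, abs_of_pos (gk_pos 0 y)] at h1
      rw [Real.norm_eq_abs, abs_mul, abs_of_pos (gk_pos 0 y)]
      have h2 : |max (inner ℝ p (y - z)) 0| ≤ ‖p‖ * ‖y - z‖ := by
        rw [abs_of_nonneg (le_max_right _ _)]
        refine max_le (real_inner_le_norm _ _) (by positivity)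
      calc gk 0 y * |max (inner ℝ p (y - z)) 0| ≤ gk 0 y * (‖p‖ * ‖y - z‖) :=
            mul_le_mul_of_nonneg_left h2 (gk_pos 0 y).le
        _ = ‖p‖ * (gk 0 y * ‖y - z‖) := by ring
        _ ≤ (‖p0‖ + 1) * (1 + ‖z - 0‖) := by
            have := gk_pos 0 y
            gcongr
    · refine Filter.Eventually.of_forall fun y => ?_
      have : Continuous fun p : E => gk 0 y * max (inner ℝ p (y - z)) 0 := by fun_prop
      exact this.continuousAt
  have hcpos : ∀ p ∈ L, p ≠ 0 → 0 < c p := by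
    intro p hp hp0
    have hnn : 0 ≤ c p := integral_nonneg fun y =>
      mul_nonneg (gk_pos 0 y).le (le_max_right _ _)
    refine lt_of_le_of_ne hnn fun h0 => hp0 ?_
    have h1 := (integral_eq_zero_iff_of_nonneg (fun y =>
      mul_nonneg (gk_pos 0 y).le (le_max_right _ _)) (hci p)).1 h0.symm
    have h2 : p ∈ N := by
      refine hNA p ?_
      filter_upwards [h1] with y hy
      have := gk_pos 0 y
      simp only [Pi.zero_apply, mul_eq_zero] at hy
      rcases hy with hy | hy
      · linarith
      · exact max_eq_right_iff.1 hy
    have := (Submodule.mem_orthogonal _ _).1 hp p h2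
    exact inner_self_eq_zero.1 this
  have hchom : ∀ (p : E) (t : ℝ), 0 ≤ t → c (t • p) = t * c p := by
    intro p t ht
    simp only [c]
    rw [← integral_const_mul]
    congr 1; ext y
    rw [inner_smul_left]
    simp only [conj_trivial]
    rw [← mul_zero t, ← mul_max_of_nonneg _ _ ht, mul_zero]
    ring
  have hΨc' : ∀ q, c q ≤ Ψ q := by
    intro q
    simp only [c, Ψ]
    rw [← integral_const_mul]
    refine integral_mono (hci q) ((integrable_gk ν q).const_mul _) fun y => ?_
    simp only
    have key : Real.exp (‖q‖ ^ 2 - 2 * inner ℝ q z) * gk q y =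
        gk 0 y * Real.exp (2 * inner ℝ q (y - z)) := by
      unfold gk
      rw [← Real.exp_add, ← Real.exp_add, @norm_sub_sq ℝ, inner_sub_right, real_inner_comm q y]
      congr 1
      simp; ring
    rw [key]
    refine mul_le_mul_of_nonneg_left ?_ (gk_pos 0 y).le
    refine max_le ?_ (Real.exp_pos _).le
    by_cases hs : 0 ≤ inner ℝ q (y - z)
    · linarith [Real.add_one_le_exp (2 * inner ℝ q (y - z))]
    · linarith [Real.exp_pos (2 * inner ℝ q (y - z))]
  have hlow : ∃ k > 0, ∀ p : L, k * ‖p‖ ≤ Ψ p := by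
    by_cases hsp : (Metric.sphere (0 : L) 1).Nonempty
    · obtain ⟨p0, hp0, hmin⟩ := (isCompact_sphere (0 : L) 1).exists_isMinOn hsp
        (f := fun p : L => c p) (by fun_prop)
      have hp0n : ‖p0‖ = 1 := by simpa using hp0
      refine ⟨c p0, hcpos _ p0.2 ?_, fun p => ?_⟩
      · intro h
        have : p0 = 0 := by exact_mod_cast h
        rw [this] at hp0n; simp at hp0n
      · by_cases hp : p = 0
        · rw [hp]; simp only [norm_zero, mul_zero]; exact hΨ0 _
        · have hpn : 0 < ‖p‖ := norm_pos_iff.2 hp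
          have h1 : c p0 ≤ c ((‖p‖⁻¹ • p : L) : E) := hmin (by
            rw [mem_sphere_zero_iff_norm, norm_smul, norm_inv, norm_norm]
            exact inv_mul_cancel₀ hpn.ne')
          have h2 : c p = ‖p‖ * c ((‖p‖⁻¹ • p : L) : E) := by
            rw [← hchom _ _ hpn.le]
            congr 1
            push_cast
            rw [smul_smul, mul_inv_cancel₀ hpn.ne', one_smul]
          have := hΨc' p
          rw [h2] at this
          nlinarith
    · refine ⟨1, one_pos, fun p => ?_⟩
      have : p = 0 := by
        by_contra hp
        have hpn : 0 < ‖p‖ := norm_pos_iff.2 hp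
        exact hsp ⟨‖p‖⁻¹ • p, by
          rw [mem_sphere_zero_iff_norm, norm_smul, norm_inv, norm_norm]
          exact inv_mul_cancel₀ hpn.ne'⟩
      rw [this]; simp only [norm_zero, mul_zero]; exact hΨ0 _
  obtain ⟨k, hk, hlow⟩ := hlow
  have htend : Filter.Tendsto (fun p : L => Ψ p) (Filter.cocompact L) Filter.atTop :=
    Filter.tendsto_atTop_mono hlow
      (Filter.Tendsto.const_mul_atTop hk tendsto_norm_cocompact_atTop)
  obtain ⟨q, hq⟩ := (hΨc.comp continuous_subtype_val).exists_forall_le (β := L) htend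
  refine ⟨q, ?_⟩
  have hvar : ∀ h : L, ∀ t : ℝ, 0 < t → 0 ≤ inner ℝ (h : E) (hG ν (q + t • (h : E)) z) := by
    intro h t ht
    have h1 := hq (q + t • h)
    simp only [Function.comp, Ψ, Submodule.coe_add, Submodule.coe_smul] at h1
    have h2 : Real.exp (‖(q : E) + t • (h : E)‖ ^ 2 - 2 * inner ℝ ((q : E) + t • (h : E)) z) *
        ∫ y, gk ((q : E) + t • (h : E)) y ∂ν
        - Real.exp (‖(q : E)‖ ^ 2 - 2 * inner ℝ (q : E) z) * ∫ y, gk (q : E) y ∂ν ≤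
        2 * t * (Real.exp (‖(q : E) + t • (h : E)‖ ^ 2 - 2 * inner ℝ ((q : E) + t • (h : E)) z) *
          inner ℝ (h : E) (hG ν (q + t • (h : E)) z)) := by
      rw [inner_hG, ← integral_const_mul, ← integral_const_mul, ← integral_const_mul,
        ← integral_const_mul,
        ← integral_sub ((integrable_gk ν _).const_mul _) ((integrable_gk ν _).const_mul _)]
      refine integral_mono (((integrable_gk ν _).const_mul _).sub
        ((integrable_gk ν _).const_mul _))
        (((integrable_gk_inner ν _ _ _).const_mul _).const_mul _) fun y => ?_
      exact exp_conv _ _ _ _ _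
    have h3 : 0 ≤ (2 * t * Real.exp (‖(q : E) + t • (h : E)‖ ^ 2
        - 2 * inner ℝ ((q : E) + t • (h : E)) z)) *
          inner ℝ (h : E) (hG ν (q + t • (h : E)) z) := by
      rw [mul_assoc]; linarith
    have h4 := Real.exp_pos (‖(q : E) + t • (h : E)‖ ^ 2 - 2 * inner ℝ ((q : E) + t • (h : E)) z)
    exact nonneg_of_mul_nonneg_right h3 (by positivity)
  have hlim : ∀ h : L, 0 ≤ inner ℝ (h : E) (hG ν q z) := by
    intro h
    have hc : Continuous fun t : ℝ => inner ℝ (h : E) (hG ν (q + t • (h : E)) z) := by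
      have := (continuous_hG ν).comp
        (f := fun t : ℝ => ((q : E) + t • (h : E), z)) (by fun_prop)
      exact Continuous.inner continuous_const this
    have h1 : Filter.Tendsto (fun t : ℝ => inner ℝ (h : E) (hG ν (q + t • (h : E)) z))
        (nhdsWithin 0 (Set.Ioi 0)) (nhds (inner ℝ (h : E) (hG ν q z))) := by
      have := (hc.tendsto 0).mono_left (nhdsWithin_le_nhds (s := Set.Ioi 0))
      simpa using this
    refine ge_of_tendsto h1 ?_
    filter_upwards [self_mem_nhdsWithin] with t ht using hvar h t ht
  have h1 := hlim (-⟨hG ν q z, hGL q⟩)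
  simp only [Submodule.coe_neg, inner_neg_left] at h1
  have h2 : inner ℝ (hG ν q z) (hG ν q z) ≤ 0 := by linarith
  rw [real_inner_self_eq_norm_sq] at h2
  exact norm_eq_zero.1 (by nlinarith [norm_nonneg (hG ν q z)])

end GaussPart

open MeasureTheory
open scoped Classical
set_option linter.unusedSectionVars false
set_option linter.unusedSimpArgs false

section SelPart
variable {β : Type*} [MeasurableSpace β]
variable {S : Type*} [MetricSpace S] [TopologicalSpace.SeparableSpace S] [CompleteSpace S]
  [Nonempty S] [MeasurableSpace S] [BorelSpace S]

lemma sel_step (T : β → Set S)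
    (hT : ∀ V, IsOpen V → MeasurableSet {b | (T b ∩ V).Nonempty})
    (r : ℝ) (hr : 0 < r) (i : β → ℕ) (hi : Measurable i)
    (hh : ∀ b, (T b ∩ Metric.ball (TopologicalSpace.denseSeq S (i b)) r).Nonempty) :
    ∃ j : β → ℕ, Measurable j ∧
      (∀ b, (T b ∩ Metric.ball (TopologicalSpace.denseSeq S (j b)) (r / 2)).Nonempty) ∧
      ∀ b, dist (TopologicalSpace.denseSeq S (i b)) (TopologicalSpace.denseSeq S (j b)) ≤ 2 * r := by
  set d := TopologicalSpace.denseSeq S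
  have hd : DenseRange d := TopologicalSpace.denseRange_denseSeq S
  have hex : ∀ b, ∃ k, (T b ∩ (Metric.ball (d (i b)) r ∩ Metric.ball (d k) (r / 2))).Nonempty := by
    intro b
    obtain ⟨t, ht, htb⟩ := hh b
    obtain ⟨k, hk⟩ := hd.exists_dist_lt t (half_pos hr)
    exact ⟨k, t, ht, htb, hk⟩
  refine ⟨fun b => Nat.find (hex b), measurable_find hex fun k => ?_, fun b => ?_, fun b => ?_⟩
  · have : {b | (T b ∩ (Metric.ball (d (i b)) r ∩ Metric.ball (d k) (r / 2))).Nonempty} =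
        ⋃ m, (i ⁻¹' {m}) ∩
          {b | (T b ∩ (Metric.ball (d m) r ∩ Metric.ball (d k) (r / 2))).Nonempty} := by
      ext b; simp
    rw [this]
    exact MeasurableSet.iUnion fun m => (hi (measurableSet_singleton m)).inter
      (hT _ (Metric.isOpen_ball.inter Metric.isOpen_ball))
  · obtain ⟨t, ht, h1, h2⟩ := Nat.find_spec (hex b)
    exact ⟨t, ht, h2⟩
  · obtain ⟨t, ht, h1, h2⟩ := Nat.find_spec (hex b)
    have := dist_triangle_left (d (i b)) (d (Nat.find (hex b))) t
    rw [Metric.mem_ball] at h1 h2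
    linarith

/-- Kuratowski and Ryll-Nardzewski. -/
lemma exists_sel (T : β → Set S) (hne : ∀ b, (T b).Nonempty)
    (hT : ∀ V, IsOpen V → MeasurableSet {b | (T b ∩ V).Nonempty}) :
    ∃ f : β → S, Measurable f ∧ ∀ b, f b ∈ closure (T b) := by
  set d := TopologicalSpace.denseSeq S with hdd
  have hd : DenseRange d := TopologicalSpace.denseRange_denseSeq S
  let P : ℕ → Type _ := fun n => {i : β → ℕ // Measurable i ∧
    ∀ b, (T b ∩ Metric.ball (d (i b)) ((1 / 2) ^ n)).Nonempty}
  have h0 : Nonempty (P 0) := by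
    have hex : ∀ b, ∃ k, (T b ∩ Metric.ball (d k) 1).Nonempty := by
      intro b
      obtain ⟨t, ht⟩ := hne b
      obtain ⟨k, hk⟩ := hd.exists_dist_lt t one_pos
      exact ⟨k, t, ht, hk⟩
    refine ⟨⟨fun b => Nat.find (hex b), measurable_find hex fun k => hT _ Metric.isOpen_ball,
      fun b => ?_⟩⟩
    rw [pow_zero]; exact Nat.find_spec (hex b)
  have hs : ∀ n (i : P n), ∃ j : P (n + 1), ∀ b, dist (d (i.1 b)) (d (j.1 b)) ≤ 2 * (1 / 2) ^ n := by
    intro n i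
    obtain ⟨j, hj1, hj2, hj3⟩ := sel_step T hT ((1 / 2) ^ n) (by positivity) i.1 i.2.1 i.2.2
    refine ⟨⟨j, hj1, fun b => ?_⟩, hj3⟩
    have := hj2 b
    rw [pow_succ]
    convert this using 3; ring
  choose step hstep using hs
  let F : ∀ n, P n := fun n => Nat.rec h0.some (fun n i => step n i) n
  have hF : ∀ n b, dist (d ((F n).1 b)) (d ((F (n + 1)).1 b)) ≤ 2 * (1 / 2) ^ n :=
    fun n b => hstep n (F n) b
  have hlim : ∀ b, ∃ x, Filter.Tendsto (fun n => d ((F n).1 b)) Filter.atTop (nhds x) := fun b =>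
    cauchySeq_tendsto_of_complete
      (cauchySeq_of_le_geometric (1 / 2) 2 (by norm_num) fun n => hF n b)
  choose f hf using hlim
  refine ⟨f, measurable_of_tendsto_metrizable (f := fun n b => d ((F n).1 b))
    (fun n => (measurable_from_nat (f := d)).comp (F n).2.1)
    (tendsto_pi_nhds.2 hf), fun b => ?_⟩
  rw [Metric.mem_closure_iff]
  intro ε hε
  have h1 := (Metric.tendsto_nhds.1 (hf b) (ε / 2) (half_pos hε))
  have h2 : ∀ᶠ n : ℕ in Filter.atTop, ((1 : ℝ) / 2) ^ n < ε / 2 :=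
    (tendsto_pow_atTop_nhds_zero_of_lt_one (by norm_num) (by norm_num)).eventually_lt_const
      (half_pos hε)
  obtain ⟨n, hn1, hn2⟩ := (h1.and h2).exists
  obtain ⟨t, ht, htb⟩ := (F n).2.2 b
  refine ⟨t, ht, ?_⟩
  rw [Metric.mem_ball] at htb
  have := dist_triangle (f b) (d ((F n).1 b)) t
  have e1 := dist_comm (f b) (d ((F n).1 b))
  have e2 := dist_comm t (d ((F n).1 b))
  linarith

/-- Castaing representation. -/
lemma exists_castaing (T : β → Set S) (hne : ∀ b, (T b).Nonempty)
    (hT : ∀ V, IsOpen V → MeasurableSet {b | (T b ∩ V).Nonempty}) :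
    ∃ f : ℕ → β → S, (∀ k, Measurable (f k)) ∧
      ∀ b, closure (Set.range fun k => f k b) = closure (T b) := by
  set d := TopologicalSpace.denseSeq S with hdd
  have hd : DenseRange d := TopologicalSpace.denseRange_denseSeq S
  have key : ∀ k : ℕ, ∃ f : β → S, Measurable f ∧ ∀ b, f b ∈ closure (T b) ∧
      ((T b ∩ Metric.ball (d k.unpair.1) (1 / ((k.unpair.2 : ℝ) + 1))).Nonempty →
        dist (f b) (d k.unpair.1) ≤ 1 / ((k.unpair.2 : ℝ) + 1)) := by
    intro k
    set B := Metric.ball (d k.unpair.1) (1 / ((k.unpair.2 : ℝ) + 1)) with hB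
    let T' : β → Set S := fun b => if (T b ∩ B).Nonempty then T b ∩ B else T b
    have hT'1 : ∀ b, (T b ∩ B).Nonempty → T' b = T b ∩ B := fun b hb => by simp [T', hb]
    have hT'2 : ∀ b, ¬ (T b ∩ B).Nonempty → T' b = T b := fun b hb => by
      simp only [T']; rw [if_neg hb]
    obtain ⟨f, hf, hf2⟩ := exists_sel T' (fun b => by
      by_cases hb : (T b ∩ B).Nonempty
      · rw [hT'1 b hb]; exact hb
      · rw [hT'2 b hb]; exact hne b) (fun V hV => by
      have : {b | (T' b ∩ V).Nonempty} =
          ({b | (T b ∩ (B ∩ V)).Nonempty}) ∪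
          ({b | (T b ∩ B).Nonempty}ᶜ ∩ {b | (T b ∩ V).Nonempty}) := by
        ext b
        simp only [Set.mem_ofPred_eq, Set.mem_union, Set.mem_inter_iff, Set.mem_compl_iff]
        by_cases hb : (T b ∩ B).Nonempty
        · rw [hT'1 b hb, Set.inter_assoc]; simp [hb]
        · rw [hT'2 b hb]; simp only [hb, not_false_eq_true, true_and]
          constructor
          · exact fun h => Or.inr h
          · rintro (⟨t, h1, h2, h3⟩ | h)
            · exact ⟨t, h1, h3⟩
            · exact h
      rw [this]
      exact (hT _ (Metric.isOpen_ball.inter hV)).union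
        ((hT _ Metric.isOpen_ball).compl.inter (hT _ hV)))
    refine ⟨f, hf, fun b => ?_⟩
    have := hf2 b
    by_cases hb : (T b ∩ B).Nonempty
    · rw [hT'1 b hb] at this
      refine ⟨closure_mono Set.inter_subset_left this, fun _ => ?_⟩
      have h3 := closure_mono Set.inter_subset_right this
      exact Metric.closure_ball_subset_closedBall h3
    · rw [hT'2 b hb] at this
      exact ⟨this, fun h => absurd h hb⟩
  choose f hf hf2 using key
  refine ⟨f, hf, fun b => ?_⟩
  apply subset_antisymm
  · refine closure_minimal ?_ isClosed_closure
    rintro _ ⟨k, rfl⟩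
    exact (hf2 k b).1
  · refine closure_minimal ?_ isClosed_closure
    intro t ht
    rw [Metric.mem_closure_range_iff]
    intro ε hε
    obtain ⟨m, hm⟩ := exists_nat_one_div_lt (half_pos hε)
    obtain ⟨i, hi⟩ := hd.exists_dist_lt t (show (0 : ℝ) < 1 / ((m : ℝ) + 1) by positivity)
    refine ⟨Nat.pair i m, ?_⟩
    have h1 := (hf2 (Nat.pair i m) b).2
    rw [Nat.unpair_pair] at h1
    have h2 := h1 ⟨t, ht, hi⟩
    simp only at h2
    have := dist_triangle_right t (f (Nat.pair i m) b) (d i)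
    linarith

end SelPart

section CarPart
variable {β : Type*} [MeasurableSpace β]
variable {S : Type*} [MetricSpace S] [ProperSpace S]

lemma meas_zero_compact (g : β → S → ℝ) (hgc : ∀ b, Continuous (g b))
    (hgm : ∀ s, Measurable fun b => g b s) {K : Set S} (hK : IsCompact K) :
    MeasurableSet {b | ∃ s ∈ K, g b s = 0} := by
  obtain ⟨D, hDK, hDc, hKD⟩ :=
    (TopologicalSpace.IsSeparable.of_separableSpace K).exists_countable_dense_subset
  have : {b | ∃ s ∈ K, g b s = 0} = ⋂ n : ℕ, ⋃ s ∈ D, {b | |g b s| < 1 / ((n : ℝ) + 1)} := by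
    ext b
    simp only [Set.mem_ofPred_eq, Set.mem_iInter, Set.mem_iUnion, exists_prop]
    constructor
    · rintro ⟨s, hs, h0⟩ n
      have hs' := hKD hs
      have hopen : IsOpen {s | |g b s| < 1 / ((n : ℝ) + 1)} :=
        isOpen_lt (hgc b).abs continuous_const
      obtain ⟨u, hu1, hu2⟩ := mem_closure_iff.1 hs' _ hopen
        (by simp only [Set.mem_ofPred_eq, h0, abs_zero]; positivity)
      exact ⟨u, hu2, hu1⟩
    · intro h
      obtain ⟨s0, hs0, -⟩ := h 0
      obtain ⟨s, hs, hmin⟩ := hK.exists_isMinOn ⟨s0, hDK hs0⟩ (hgc b).abs.continuousOn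
      refine ⟨s, hs, ?_⟩
      by_contra hne
      obtain ⟨n, hn⟩ := exists_nat_one_div_lt (abs_pos.2 hne)
      obtain ⟨u, hu, hu2⟩ := h n
      have : |g b s| ≤ |g b u| := hmin (hDK hu)
      linarith
  rw [this]
  refine MeasurableSet.iInter fun n => MeasurableSet.biUnion hDc fun s _ => ?_
  exact measurableSet_lt ((hgm s).abs) measurable_const

lemma meas_zero_closed (g : β → S → ℝ) (hgc : ∀ b, Continuous (g b))
    (hgm : ∀ s, Measurable fun b => g b s) {F : Set S} (hF : IsClosed F) :
    MeasurableSet {b | ∃ s ∈ F, g b s = 0} := by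
  have : {b | ∃ s ∈ F, g b s = 0} = ⋃ n, {b | ∃ s ∈ F ∩ compactCovering S n, g b s = 0} := by
    ext b
    simp only [Set.mem_ofPred_eq, Set.mem_iUnion]
    constructor
    · rintro ⟨s, hs, h⟩
      obtain ⟨n, hn⟩ := exists_mem_compactCovering s
      exact ⟨n, s, ⟨hs, hn⟩, h⟩
    · rintro ⟨n, s, hs, h⟩
      exact ⟨s, hs.1, h⟩
  rw [this]
  exact MeasurableSet.iUnion fun n =>
    meas_zero_compact g hgc hgm ((isCompact_compactCovering S n).inter_left hF)

lemma meas_zero_open (g : β → S → ℝ) (hgc : ∀ b, Continuous (g b))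
    (hgm : ∀ s, Measurable fun b => g b s) {V : Set S} (hV : IsOpen V) :
    MeasurableSet {b | ∃ s ∈ V, g b s = 0} := by
  obtain ⟨F, hFc, -, hFu, -⟩ := hV.exists_iUnion_isClosed
  have : {b | ∃ s ∈ V, g b s = 0} = ⋃ n, {b | ∃ s ∈ F n, g b s = 0} := by
    ext b
    simp only [← hFu, Set.mem_ofPred_eq, Set.mem_iUnion]
    constructor
    · rintro ⟨s, ⟨n, hs⟩, h⟩; exact ⟨n, s, hs, h⟩
    · rintro ⟨n, s, hs, h⟩; exact ⟨s, ⟨n, hs⟩, h⟩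
  rw [this]
  exact MeasurableSet.iUnion fun n => meas_zero_closed g hgc hgm (hFc n)

lemma exists_zero_sel [Nonempty S] [MeasurableSpace S] [BorelSpace S]
    (g : β → S → ℝ) (hgc : ∀ b, Continuous (g b))
    (hgm : ∀ s, Measurable fun b => g b s) :
    ∃ q : β → S, Measurable q ∧ ∀ b, (∃ s, g b s = 0) → g b (q b) = 0 := by
  let T : β → Set S := fun b => if ∃ s, g b s = 0 then {s | g b s = 0} else Set.univ
  obtain ⟨q, hq, hq2⟩ := exists_sel T (fun b => by
    by_cases h : ∃ s, g b s = 0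
    · simp only [T]; rw [if_pos h]; exact h
    · simp only [T]; rw [if_neg h]; exact Set.univ_nonempty) (fun V hV => by
    have : {b | (T b ∩ V).Nonempty} = {b | ∃ s ∈ V, g b s = 0} ∪
        ({b | ∃ s ∈ (Set.univ : Set S), g b s = 0}ᶜ ∩ {b | V.Nonempty}) := by
      ext b
      simp only [Set.mem_ofPred_eq, Set.mem_union, Set.mem_inter_iff, Set.mem_compl_iff, T,
        Set.mem_univ, true_and]
      by_cases h : ∃ s, g b s = 0
      · rw [if_pos h]; simp only [h, not_true_eq_false, false_and, or_false]
        constructor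
        · rintro ⟨s, h1, h2⟩; exact ⟨s, h2, h1⟩
        · rintro ⟨s, h1, h2⟩; exact ⟨s, h2, h1⟩
      · rw [if_neg h]; simp only [h, not_false_eq_true, true_and, Set.univ_inter]
        constructor
        · exact Or.inr
        · rintro (⟨s, h1, h2⟩ | h2)
          · exact ⟨s, h1⟩
          · exact h2
    rw [this]
    exact (meas_zero_open g hgc hgm hV).union
      ((meas_zero_open g hgc hgm isOpen_univ).compl.inter (MeasurableSet.const _)))
  refine ⟨q, hq, fun b hb => ?_⟩
  have := hq2 b
  simp only [T] at this
  rw [if_pos hb, (isClosed_eq (hgc b) continuous_const).closure_eq] at this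
  exact this

end CarPart

section KerPart
open ProbabilityTheory
variable {β : Type*} [MeasurableSpace β]
variable {E : Type*} [NormedAddCommGroup E] [InnerProductSpace ℝ E] [FiniteDimensional ℝ E]
  [MeasurableSpace E] [BorelSpace E]

lemma measurable_hG (ν : Kernel β E) [IsFiniteKernel ν] {q z : β → E} (hq : Measurable q)
    (hz : Measurable z) : Measurable fun b => hG (ν b) (q b) (z b) := by
  have : StronglyMeasurable (fun x : β × E => gk (q x.1) x.2 • (x.2 - z x.1)) := by
    refine Measurable.stronglyMeasurable ?_
    refine Measurable.smul ?_ ?_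
    · exact continuous_gk.measurable.comp ((hq.comp measurable_fst).prodMk measurable_snd)
    · exact measurable_snd.sub (hz.comp measurable_fst)
  exact (this.integral_kernel_prod_right' (κ := ν)).measurable

/-- measurable choice of the Gaussian centre -/
lemma exists_meas_q (ν : Kernel β E) [IsFiniteKernel ν] {z : β → E} (hz : Measurable z) :
    ∃ q : β → E, Measurable q ∧ ∀ b, NAm (ν b) (z b) → hG (ν b) (q b) (z b) = 0 := by
  obtain ⟨q, hq, hq2⟩ := exists_zero_sel (fun b s => ‖hG (ν b) s (z b)‖)
    (fun b => ((continuous_hG (ν b)).comp (by fun_prop : Continuous fun s => (s, z b))).norm)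
    (fun s => (measurable_hG ν measurable_const hz).norm)
  refine ⟨q, hq, fun b hb => ?_⟩
  obtain ⟨s, hs⟩ := exists_hG_of_NAm hb
  exact norm_eq_zero.1 (hq2 b ⟨s, by rw [hs, norm_zero]⟩)

lemma meas_inter_hit (ν₁ ν₂ : Kernel β E) [IsFiniteKernel ν₁] [IsFiniteKernel ν₂]
    {V : Set E} (hV : IsOpen V) :
    MeasurableSet {b | ∃ z ∈ V, NAm (ν₁ b) z ∧ NAm (ν₂ b) z} := by
  have : {b | ∃ z ∈ V, NAm (ν₁ b) z ∧ NAm (ν₂ b) z} =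
      {b | ∃ s ∈ {s : E × E × E | s.2.2 ∈ V},
        ‖hG (ν₁ b) s.1 s.2.2‖ + ‖hG (ν₂ b) s.2.1 s.2.2‖ = 0} := by
    ext b
    simp only [Set.mem_ofPred_eq]
    constructor
    · rintro ⟨z, hz, h1, h2⟩
      obtain ⟨q, hq⟩ := exists_hG_of_NAm h1
      obtain ⟨q', hq'⟩ := exists_hG_of_NAm h2
      exact ⟨(q, q', z), hz, by simp [hq, hq']⟩
    · rintro ⟨⟨q, q', z⟩, hz, h⟩
      simp only at h hz
      have h1 : ‖hG (ν₁ b) q z‖ = 0 := by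
        linarith [norm_nonneg (hG (ν₁ b) q z), norm_nonneg (hG (ν₂ b) q' z)]
      have h2 : ‖hG (ν₂ b) q' z‖ = 0 := by
        linarith [norm_nonneg (hG (ν₁ b) q z), norm_nonneg (hG (ν₂ b) q' z)]
      exact ⟨z, hz, NAm_of_hG (norm_eq_zero.1 h1), NAm_of_hG (norm_eq_zero.1 h2)⟩
  rw [this]
  refine meas_zero_open _ (fun b => ?_) (fun s => ?_) (hV.preimage (by fun_prop))
  · exact ((continuous_hG (ν₁ b)).comp
      (by fun_prop : Continuous fun s : E × E × E => (s.1, s.2.2))).norm.add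
      ((continuous_hG (ν₂ b)).comp
      (by fun_prop : Continuous fun s : E × E × E => (s.2.1, s.2.2))).norm
  · exact (measurable_hG ν₁ measurable_const measurable_const).norm.add
      (measurable_hG ν₂ measurable_const measurable_const).norm

/-- a finite measure on `ℕ` charging all points -/
noncomputable def cN : Measure ℕ := (Measure.count : Measure ℕ).toFinite

instance : IsFiniteMeasure cN := by unfold cN; infer_instance

lemma ae_cN {p : ℕ → Prop} : (∀ᵐ k ∂cN, p k) ↔ ∀ k, p k := by
  unfold cN
  rw [ae_toFinite, Measure.ae_count_iff]

lemma cN_ne (k : ℕ) : cN {k} ≠ 0 := by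
  intro h
  have : ∀ᵐ j ∂cN, j ≠ k := by
    rw [ae_iff]; simpa using h
  exact (ae_cN.1 this k) rfl

/-- kernel associated with a sequence of functions -/
noncomputable def seqKer (f : ℕ → β → E) (hf : ∀ k, Measurable (f k)) : Kernel β E where
  toFun b := cN.map fun k => f k b
  measurable' := by
    refine Measure.measurable_of_measurable_coe _ fun s hs => ?_
    have h1 : Measurable (fun x : β × ℕ => f x.2 x.1) := measurable_from_prod_countable_left hf
    have h2 := measurable_measure_prodMk_left (ν := cN) (h1 hs)
    convert h2 using 2 with b
    rw [Measure.map_apply (measurable_from_nat) hs]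
    rfl

instance (f : ℕ → β → E) (hf : ∀ k, Measurable (f k)) : IsFiniteKernel (seqKer f hf) := by
  refine ⟨cN Set.univ, measure_lt_top _ _, fun b => ?_⟩
  show (cN.map fun k => f k b) Set.univ ≤ _
  rw [Measure.map_apply (measurable_from_nat) MeasurableSet.univ]; simp

lemma NAm_map_cN (f : ℕ → E) (z : E) : NAm (cN.map f) z ↔ NAs (Set.range f) z := by
  have h1 : ∀ p, (∀ᵐ y ∂(cN.map f), inner ℝ p (y - z) ≤ 0) ↔
      ∀ y ∈ Set.range f, inner ℝ p (y - z) ≤ 0 := by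
    intro p
    rw [ae_map_iff (measurable_from_nat).aemeasurable
      (measurableSet_le (by fun_prop) measurable_const), ae_cN]
    simp
  have h2 : ∀ p, (∀ᵐ y ∂(cN.map f), inner ℝ p (y - z) = 0) ↔
      ∀ y ∈ Set.range f, inner ℝ p (y - z) = 0 := by
    intro p
    rw [ae_map_iff (measurable_from_nat).aemeasurable
      (measurableSet_eq_fun (by fun_prop) measurable_const), ae_cN]
    simp
  unfold NAm NAs
  simp only [h1, h2]

lemma hG_map_cN (f : ℕ → E) (q z : E) :
    hG (cN.map f) q z = ∫ k, gk q (f k) • (f k - z) ∂cN := by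
  unfold hG
  rw [integral_map (measurable_from_nat).aemeasurable (aesm_gk_smul _ q z)]

end KerPart

open MeasureTheory
open scoped Classical
set_option linter.unusedSectionVars false
set_option linter.unusedSimpArgs false

section CondPart
open ProbabilityTheory
variable {α β : Type*} {mα : MeasurableSpace α} {mβ : MeasurableSpace β}
variable {E : Type*} [NormedAddCommGroup E] [InnerProductSpace ℝ E] [FiniteDimensional ℝ E]
  [CompleteSpace E] [SecondCountableTopology E]
  [MeasurableSpace E] [BorelSpace E]

lemma cd_null {μ : Measure α} [IsFiniteMeasure μ] {X : α → β} {Y : α → E} (hX : Measurable X)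
    (hY : Measurable Y) {B : Set β} (hB : MeasurableSet B) {V : Set E} (hV : MeasurableSet V) :
    (∀ᵐ a ∂μ, X a ∈ B → Y a ∉ V) ↔ ∀ᵐ a ∂μ, X a ∈ B → condDistrib Y X μ (X a) V = 0 := by
  have h1 : (μ.map fun a => (X a, Y a)) (B ×ˢ V) = ∫⁻ b in B, condDistrib Y X μ b V ∂(μ.map X) := by
    rw [← compProd_map_condDistrib (μ := μ) (X := X) hY.aemeasurable,
      Measure.compProd_apply_prod hB hV]
  have hm : Measurable fun b => condDistrib Y X μ b V := Kernel.measurable_coe _ hV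
  have h2 : (∀ᵐ a ∂μ, X a ∈ B → Y a ∉ V) ↔ (μ.map fun a => (X a, Y a)) (B ×ˢ V) = 0 := by
    rw [Measure.map_apply (hX.prodMk hY) (hB.prod hV), ae_iff]
    apply Eq.congr _ rfl
    congr 1
    ext a; simp [and_comm]
  rw [h2, h1, lintegral_eq_zero_iff hm, Filter.EventuallyEq, ae_restrict_iff' hB, ae_map_iff hX.aemeasurable]
  · rfl
  · have : {x | x ∈ B → condDistrib Y X μ x V = (0 : β → ENNReal) x} = Bᶜ ∪ {x | condDistrib Y X μ x V = 0} := by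
      ext x; simp [imp_iff_not_or]
    rw [this]
    exact hB.compl.union (hm (measurableSet_singleton 0))

lemma cd_integral {μ : Measure α} [IsFiniteMeasure μ] {X : α → β} {Y : α → E} (hX : Measurable X)
    (hY : Measurable Y) {A : Set β} (hA : MeasurableSet A) {φ : β × E → E} (hφ : Measurable φ)
    (hi : Integrable (fun a => φ (X a, Y a)) μ) :
    ∫ a in X ⁻¹' A, φ (X a, Y a) ∂μ
      = ∫ b in A, ∫ y, φ (b, y) ∂(condDistrib Y X μ b) ∂(μ.map X) := by
  have hp := hX.prodMk hY
  have hi' : Integrable φ (μ.map fun a => (X a, Y a)) :=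
    (integrable_map_measure hφ.aestronglyMeasurable hp.aemeasurable).2 hi
  have h1 : ∫ a in X ⁻¹' A, φ (X a, Y a) ∂μ
      = ∫ x in A ×ˢ Set.univ, φ x ∂(μ.map fun a => (X a, Y a)) := by
    rw [setIntegral_map (hA.prod MeasurableSet.univ) hφ.aestronglyMeasurable hp.aemeasurable]
    congr 2
    ext a; simp
  rw [h1]
  rw [← compProd_map_condDistrib (μ := μ) (X := X) hY.aemeasurable] at hi' ⊢
  rw [Measure.setIntegral_compProd hA MeasurableSet.univ hi'.integrableOn]
  simp

/-- the bounded density -/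
noncomputable def dk (q z y : E) : ℝ := gk q y / (1 + ‖z - q‖)

lemma dk_pos (q z y : E) : 0 < dk q z y := by
  unfold dk; have := gk_pos q y; positivity

lemma dk_le_one (q z y : E) : dk q z y ≤ 1 := by
  unfold dk
  rw [div_le_one (by positivity)]
  linarith [gk_le_one q y, norm_nonneg (z - q)]

lemma norm_dk_smul_le (q z y : E) : ‖dk q z y • (y - z)‖ ≤ 1 := by
  have h := norm_gk_smul_le q y z
  have : dk q z y • (y - z) = (1 + ‖z - q‖)⁻¹ • (gk q y • (y - z)) := by
    unfold dk; rw [smul_smul, div_eq_inv_mul]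
  rw [this, norm_smul, norm_inv, Real.norm_of_nonneg (by positivity), inv_mul_le_one₀ (by positivity)]
  exact h

lemma meas_dk {γ : Type*} {mγ : MeasurableSpace γ} {q z y : γ → E} (hq : Measurable q)
    (hz : Measurable z) (hy : Measurable y) : Measurable fun a => dk (q a) (z a) (y a) := by
  unfold dk
  have h1 : Measurable fun a => gk (q a) (y a) := continuous_gk.measurable.comp (hq.prodMk hy)
  exact h1.div (measurable_const.add (hz.sub hq).norm)

/-- Lemma T -/
lemma lemT {μ : Measure α} [IsFiniteMeasure μ] {X : α → β} {Y : α → E} (hX : Measurable X)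
    (hY : Measurable Y) {z : β → E} (hz : Measurable z)
    (hNA : ∀ᵐ a ∂μ, NAm (condDistrib Y X μ (X a)) (z (X a))) :
    ∃ q : β → E, Measurable q ∧ ∀ A, MeasurableSet A →
      ∫ a in X ⁻¹' A, dk (q (X a)) (z (X a)) (Y a) • (Y a - z (X a)) ∂μ = 0 := by
  obtain ⟨q, hq, hq2⟩ := exists_meas_q (condDistrib Y X μ) hz
  refine ⟨q, hq, fun A hA => ?_⟩
  let φ : β × E → E := fun x => dk (q x.1) (z x.1) x.2 • (x.2 - z x.1)
  have hφ : Measurable φ := by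
    have h1 := meas_dk (hq.comp measurable_fst) (hz.comp measurable_fst)
      (measurable_snd (α := β) (β := E))
    have h2 : Measurable fun x : β × E => x.2 - z x.1 := measurable_snd.sub (hz.comp measurable_fst)
    exact h1.smul h2
  have hi : Integrable (fun a => φ (X a, Y a)) μ := by
    refine Integrable.of_bound (hφ.comp (hX.prodMk hY)).aestronglyMeasurable 1 ?_
    exact Filter.Eventually.of_forall fun a => norm_dk_smul_le _ _ _
  have := cd_integral hX hY hA hφ hi
  change ∫ a in X ⁻¹' A, φ (X a, Y a) ∂μ = 0
  rw [this]
  have hval : ∀ b, ∫ y, φ (b, y) ∂(condDistrib Y X μ b)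
      = (1 + ‖z b - q b‖)⁻¹ • hG (condDistrib Y X μ b) (q b) (z b) := by
    intro b
    unfold hG
    rw [← integral_smul]
    congr 1
    ext y
    simp only [φ, dk]
    rw [smul_smul, div_eq_inv_mul]
  have hm : MeasurableSet {b | hG (condDistrib Y X μ b) (q b) (z b) = 0} :=
    measurable_hG _ hq hz (measurableSet_singleton 0)
  have h0 : ∀ᵐ b ∂(μ.map X), hG (condDistrib Y X μ b) (q b) (z b) = 0 := by
    rw [ae_map_iff hX.aemeasurable hm]
    filter_upwards [hNA] with a ha using hq2 _ ha
  rw [setIntegral_eq_zero_of_ae_eq_zero]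
  filter_upwards [h0] with b hb _
  rw [hval, hb, smul_zero]

/-- Lemma U -/
lemma lemU {μ : Measure α} [IsFiniteMeasure μ] {X : α → β} {Y : α → E} (hX : Measurable X)
    (hY : Measurable Y) {z : β → E} (hz : Measurable z)
    (hi : Integrable (fun a => Y a - z (X a)) μ)
    (h0 : ∀ A, MeasurableSet A → ∫ a in X ⁻¹' A, (Y a - z (X a)) ∂μ = 0) :
    ∀ᵐ a ∂μ, NAm (condDistrib Y X μ (X a)) (z (X a)) := by
  let φ : β × E → E := fun x => x.2 - z x.1
  have hφ : Measurable φ := measurable_snd.sub (hz.comp measurable_fst)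
  have hp := hX.prodMk hY
  have hi' : Integrable φ (μ.map fun a => (X a, Y a)) :=
    (integrable_map_measure hφ.aestronglyMeasurable hp.aemeasurable).2 hi
  rw [← compProd_map_condDistrib (μ := μ) (X := X) hY.aemeasurable] at hi'
  have hi1 : ∀ᵐ b ∂(μ.map X), Integrable (fun y => φ (b, y)) (condDistrib Y X μ b) :=
    ((Measure.integrable_compProd_iff hφ.aestronglyMeasurable).1 hi').1
  have hi2 : Integrable (fun b => ∫ y, φ (b, y) ∂(condDistrib Y X μ b)) (μ.map X) :=
    hi'.integral_compProd
  have hz2 : (fun b => ∫ y, φ (b, y) ∂(condDistrib Y X μ b)) =ᵐ[μ.map X] 0 := by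
    refine hi2.ae_eq_zero_of_forall_setIntegral_eq_zero fun A hA _ => ?_
    rw [← cd_integral hX hY hA hφ hi]
    exact h0 A hA
  refine ae_of_ae_map hX.aemeasurable (p := fun b => NAm (condDistrib Y X μ b) (z b)) ?_
  filter_upwards [hi1, hz2] with b hb1 hb2
  intro p hp
  have hI : ∫ y, inner ℝ p (y - z b) ∂(condDistrib Y X μ b) = 0 := by
    have : ∫ y, inner ℝ p (y - z b) ∂(condDistrib Y X μ b)
      = inner ℝ p (∫ y, φ (b, y) ∂(condDistrib Y X μ b)) := integral_inner hb1 p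
    rw [this, hb2]; simp
  have hIntg : Integrable (fun y => inner ℝ p (y - z b)) (condDistrib Y X μ b) := hb1.const_inner p
  have hp' : 0 ≤ᵐ[condDistrib Y X μ b] fun y => - inner ℝ p (y - z b) := by
    filter_upwards [hp] with y hy
    simpa using hy
  have := (integral_eq_zero_iff_of_nonneg_ae hp' hIntg.neg).1 (by rw [integral_neg, hI, neg_zero])
  filter_upwards [this] with y hy
  simpa using hy

lemma NAm_of_open {ν₁ ν₂ : Measure E} (h : ∀ U, IsOpen U → (ν₁ U = 0 ↔ ν₂ U = 0)) {z : E}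
    (hN : NAm ν₁ z) : NAm ν₂ z := by
  intro p hp
  have ho1 : IsOpen {y | ¬ inner ℝ p (y - z) ≤ 0} := by
    simp only [not_le]
    exact isOpen_lt continuous_const (by fun_prop)
  have ho2 : IsOpen {y : E | ¬ inner ℝ p (y - z) = 0} := by
    have : IsClosed {y : E | inner ℝ p (y - z) = 0} := isClosed_eq (by fun_prop) continuous_const
    exact this.isOpen_compl
  rw [ae_iff] at hp ⊢
  have := hN p (by rw [ae_iff]; exact (h _ ho1).2 hp)
  rw [ae_iff] at this
  exact (h _ ho2).1 this

/-- a measure of open sets is determined by a basis, as far as null sets are concerned -/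
lemma open_null_basis {ν : Measure E} {U : Set E} (hU : IsOpen U) :
    ν U = 0 ↔ ∀ V ∈ TopologicalSpace.countableBasis E, V ⊆ U → ν V = 0 := by
  constructor
  · intro h V _ hVU; exact measure_mono_null hVU h
  · intro h
    have hb := TopologicalSpace.isBasis_countableBasis E
    rw [hb.open_eq_sUnion' hU]
    have hc : {s ∈ TopologicalSpace.countableBasis E | s ⊆ U}.Countable :=
      (TopologicalSpace.countable_countableBasis E).mono fun s hs => hs.1
    rw [measure_sUnion_null_iff hc]
    exact fun V hV => h V hV.1 hV.2

/-- Lemma V -/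
lemma lemV {μ₁ μ₂ : Measure α} [IsFiniteMeasure μ₁] [IsFiniteMeasure μ₂] (hac : μ₁ ≪ μ₂)
    {X : α → β} {Y : α → E} (hX : Measurable X) (hY : Measurable Y) :
    ∀ᵐ a ∂μ₁, ∀ U, IsOpen U → condDistrib Y X μ₂ (X a) U = 0 → condDistrib Y X μ₁ (X a) U = 0 := by
  have h1 : ∀ V ∈ TopologicalSpace.countableBasis E, ∀ᵐ a ∂μ₁,
      condDistrib Y X μ₂ (X a) V = 0 → condDistrib Y X μ₁ (X a) V = 0 := by
    intro V hV
    have hVm : MeasurableSet V := (TopologicalSpace.isOpen_of_mem_countableBasis hV).measurableSet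
    have hB : MeasurableSet {b | condDistrib Y X μ₂ b V = 0} :=
      Kernel.measurable_coe _ hVm (measurableSet_singleton 0)
    have h2 := (cd_null (μ := μ₂) hX hY hB hVm).2 (Filter.Eventually.of_forall fun a ha => ha)
    exact (cd_null hX hY hB hVm).1 (hac.ae_le h2)
  have h2 := (ae_ball_iff (TopologicalSpace.countable_countableBasis E)).2 h1
  filter_upwards [h2] with a ha U hU h
  rw [open_null_basis hU] at h ⊢
  exact fun V hV hVU => ha V hV (h V hV hVU)

lemma lemV' {μ₁ μ₂ : Measure α} [IsFiniteMeasure μ₁] [IsFiniteMeasure μ₂] (hac : μ₁ ≪ μ₂)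
    (hac' : μ₂ ≪ μ₁) {X : α → β} {Y : α → E} (hX : Measurable X) (hY : Measurable Y)
    {z : β → E} (h : ∀ᵐ a ∂μ₁, NAm (condDistrib Y X μ₁ (X a)) (z (X a))) :
    ∀ᵐ a ∂μ₂, NAm (condDistrib Y X μ₂ (X a)) (z (X a)) := by
  have h1 := lemV hac' hX hY
  have h2 := hac'.ae_le (lemV hac hX hY)
  filter_upwards [h1, h2, hac'.ae_le h] with a ha1 ha2 ha3
  exact NAm_of_open (fun U hU => ⟨ha1 U hU, ha2 U hU⟩) ha3

end CondPart

open MeasureTheory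
open scoped Classical
set_option linter.unusedSectionVars false
set_option linter.unusedSimpArgs false

section SuppPart
open ProbabilityTheory
variable {d : ℕ}


/-- the support -/
def Kset (m : Measure (CL d)) : Set (EuclideanSpace ℝ (Fin d)) :=
  {y | ∀ ε > 0, 0 < m {D : CL d | (D.1 ∩ Metric.ball y ε).Nonempty}}

/-- hit sets -/
def hitS (V : Set (EuclideanSpace ℝ (Fin d))) : Set (CL d) := {D : CL d | (D.1 ∩ V).Nonempty}

lemma meas_hitS {V : Set (EuclideanSpace ℝ (Fin d))} (hV : IsOpen V) : MeasurableSet (hitS V) :=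
  MeasurableSpace.measurableSet_generateFrom ⟨V, hV, rfl⟩

lemma hitS_mono {U V : Set (EuclideanSpace ℝ (Fin d))} (h : U ⊆ V) : hitS U ⊆ hitS V :=
  fun _ hD => hD.mono (Set.inter_subset_inter_right _ h)

lemma Kset_hit (m : Measure (CL d)) {U : Set (EuclideanSpace ℝ (Fin d))} (hU : IsOpen U) :
    (Kset m ∩ U) = ∅ ↔ m (hitS U) = 0 := by
  constructor
  · intro h
    set S := {V ∈ TopologicalSpace.countableBasis (EuclideanSpace ℝ (Fin d)) | m (hitS V) = 0} with hS
    have hSc : S.Countable := (TopologicalSpace.countable_countableBasis _).mono fun s hs => hs.1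
    have hsub : hitS U ⊆ ⋃ V ∈ S, hitS V := by
      rintro D ⟨y, hyD, hyU⟩
      have hyK : y ∉ Kset m := fun hy => by
        have : y ∈ Kset m ∩ U := ⟨hy, hyU⟩
        rw [h] at this; exact this
      simp only [Kset, Set.mem_ofPred_eq, not_forall, not_lt, nonpos_iff_eq_zero] at hyK
      obtain ⟨ε, hε, h0⟩ := hyK
      obtain ⟨V, hV, hyV, hVb⟩ := (TopologicalSpace.isBasis_countableBasis
        (EuclideanSpace ℝ (Fin d))).exists_subset_of_mem_open (Metric.mem_ball_self hε)
        (Metric.isOpen_ball (x := y))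
      have hVS : V ∈ S := ⟨hV, measure_mono_null (hitS_mono hVb) h0⟩
      exact Set.mem_biUnion hVS ⟨y, hyD, hyV⟩
    refine measure_mono_null hsub ?_
    rw [measure_biUnion_null_iff hSc]
    exact fun V hV => hV.2
  · intro h
    rw [Set.eq_empty_iff_forall_notMem]
    rintro y ⟨hyK, hyU⟩
    obtain ⟨ε, hε, hb⟩ := Metric.isOpen_iff.1 hU y hyU
    exact (hyK ε hε).ne' (measure_mono_null (hitS_mono hb) h)

lemma NAm_iff_of_null {ν : Measure (EuclideanSpace ℝ (Fin d))} {K : Set (EuclideanSpace ℝ (Fin d))}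
    (h : ∀ U, IsOpen U → (ν U = 0 ↔ K ∩ U = ∅)) (z : EuclideanSpace ℝ (Fin d)) :
    NAm ν z ↔ NAs K z := by
  have h1 : ∀ p, (∀ᵐ y ∂ν, inner ℝ p (y - z) ≤ 0) ↔ ∀ y ∈ K, inner ℝ p (y - z) ≤ 0 := by
    intro p
    have ho1 : IsOpen {y | ¬ inner ℝ p (y - z) ≤ 0} := by
      simp only [not_le]
      exact isOpen_lt continuous_const (by fun_prop)
    rw [ae_iff, h _ ho1, Set.eq_empty_iff_forall_notMem]
    simp only [Set.mem_inter_iff, Set.mem_ofPred_eq, not_and, not_not]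
  have h2 : ∀ p, (∀ᵐ y ∂ν, inner ℝ p (y - z) = 0) ↔ ∀ y ∈ K, inner ℝ p (y - z) = 0 := by
    intro p
    have : IsClosed {y : EuclideanSpace ℝ (Fin d) | inner ℝ p (y - z) = 0} :=
      isClosed_eq (by fun_prop) continuous_const
    have ho1 : IsOpen {y : EuclideanSpace ℝ (Fin d) | ¬ inner ℝ p (y - z) = 0} := this.isOpen_compl
    rw [ae_iff, h _ ho1, Set.eq_empty_iff_forall_notMem]
    simp only [Set.mem_inter_iff, Set.mem_ofPred_eq, not_and, not_not]
  unfold NAm NAs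
  simp only [h1, h2]

variable {Ω : Type*} {ℋ mΩ : MeasurableSpace Ω} {P : Measure Ω} [IsProbabilityMeasure P]

lemma ae_fst_iff {μ : Measure (Ω × ℕ)} (h1 : μ ≪ P.prod cN) (h2 : P.prod cN ≪ μ) {p : Ω → Prop} :
    (∀ᵐ x ∂μ, p x.1) ↔ ∀ᵐ ω ∂P, p ω := by
  constructor
  · intro h
    have := Measure.ae_ae_of_ae_prod (h2.ae_le h)
    filter_upwards [this] with ω hω
    exact ae_cN.1 hω 0
  · intro h
    exact h1.ae_le (Measure.quasiMeasurePreserving_fst.ae h)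

lemma ae_prodN_iff {μ : Measure (Ω × ℕ)} (h1 : μ ≪ P.prod cN) (h2 : P.prod cN ≪ μ)
    {p : Ω → ℕ → Prop} :
    (∀ᵐ x ∂μ, p x.1 x.2) ↔ ∀ᵐ ω ∂P, ∀ k, p ω k := by
  constructor
  · intro h
    have := Measure.ae_ae_of_ae_prod (h2.ae_le h)
    filter_upwards [this] with ω hω
    exact fun k => ae_cN.1 hω k
  · intro h
    have := (ae_fst_iff h1 h2).2 h
    filter_upwards [this] with x hx
    exact hx x.2

lemma cond_null (hℋ : ℋ ≤ mΩ) {F : Ω → CL d} {κ : Ω → Measure (CL d)}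
    (hκp : ∀ ω, IsProbabilityMeasure (κ ω))
    (hκm : ∀ C, MeasurableSet C → Measurable[ℋ] fun ω => κ ω C)
    (hκc : ∀ C, MeasurableSet C → (fun ω => (κ ω C).toReal) =ᵐ[P]
        P[fun ω => if F ω ∈ C then (1 : ℝ) else 0 | ℋ])
    {C : Set (CL d)} (hC : MeasurableSet C) (hF : MeasurableSet {ω | F ω ∈ C})
    {B : Set Ω} (hB : MeasurableSet[ℋ] B) :
    (∀ᵐ ω ∂P, ω ∈ B → F ω ∉ C) ↔ ∀ᵐ ω ∂P, ω ∈ B → κ ω C = 0 := by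
  have hB' := hℋ _ hB
  set g : Ω → ℝ := fun ω => if F ω ∈ C then (1 : ℝ) else 0 with hg
  have hgm : Measurable g := Measurable.ite hF measurable_const measurable_const
  have hgi : Integrable g P := by
    refine Integrable.of_bound hgm.aestronglyMeasurable 1 (Filter.Eventually.of_forall fun ω => ?_)
    simp only [hg]; split_ifs <;> simp
  have hkm : Measurable fun ω => (κ ω C).toReal := ((hκm C hC).mono hℋ le_rfl).ennreal_toReal
  have hki : Integrable (fun ω => (κ ω C).toReal) P := by
    refine Integrable.of_bound hkm.aestronglyMeasurable 1 (Filter.Eventually.of_forall fun ω => ?_)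
    rw [Real.norm_of_nonneg ENNReal.toReal_nonneg]
    have := hκp ω
    exact measureReal_le_one
  have hIntg : ∫ ω in B, (κ ω C).toReal ∂P = ∫ ω in B, g ω ∂P := by
    rw [← setIntegral_condExp hℋ hgi hB]
    exact setIntegral_congr_ae hB' ((hκc C hC).mono fun ω h _ => h)
  have e1 : (∀ᵐ ω ∂P, ω ∈ B → F ω ∉ C) ↔ ∫ ω in B, g ω ∂P = 0 := by
    rw [setIntegral_eq_zero_iff_of_nonneg_ae (Filter.Eventually.of_forall fun ω => by
      simp only [hg]; split_ifs <;> simp) hgi.integrableOn, Filter.EventuallyEq, ae_restrict_iff' hB']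
    apply Filter.eventually_congr (Filter.Eventually.of_forall fun ω => ?_)
    simp [hg]
  have e2 : (∀ᵐ ω ∂P, ω ∈ B → κ ω C = 0) ↔ ∫ ω in B, (κ ω C).toReal ∂P = 0 := by
    rw [setIntegral_eq_zero_iff_of_nonneg_ae (Filter.Eventually.of_forall fun ω =>
      ENNReal.toReal_nonneg) hki.integrableOn, Filter.EventuallyEq, ae_restrict_iff' hB']
    apply Filter.eventually_congr (Filter.Eventually.of_forall fun ω => ?_)
    have := hκp ω
    simp [ENNReal.toReal_eq_zero_iff]
  rw [e1, e2, hIntg]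

lemma supp_lem (hℋ : ℋ ≤ mΩ) {F : Ω → CL d} {κ : Ω → Measure (CL d)}
    (hκp : ∀ ω, IsProbabilityMeasure (κ ω))
    (hκm : ∀ C, MeasurableSet C → Measurable[ℋ] fun ω => κ ω C)
    (hκc : ∀ C, MeasurableSet C → (fun ω => (κ ω C).toReal) =ᵐ[P]
        P[fun ω => if F ω ∈ C then (1 : ℝ) else 0 | ℋ])
    (hF : ∀ V : Set (EuclideanSpace ℝ (Fin d)), IsOpen V →
      MeasurableSet {ω | ((F ω).1 ∩ V).Nonempty})
    {f : ℕ → Ω → EuclideanSpace ℝ (Fin d)} (hf : ∀ k, Measurable (f k))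
    (hfF : ∀ᵐ ω ∂P, closure (Set.range fun k => f k ω) = (F ω).1)
    {μ : Measure (Ω × ℕ)} [IsFiniteMeasure μ] (h1 : μ ≪ P.prod cN) (h2 : P.prod cN ≪ μ) :
    ∀ᵐ ω ∂P, ∀ z, NAm (@condDistrib (Ω × ℕ) Ω (EuclideanSpace ℝ (Fin d)) _ _ _ _ ℋ (fun x => f x.2 x.1) Prod.fst μ _ ω) z
      ↔ NAs (Kset (κ ω)) z := by
  set ν := @condDistrib (Ω × ℕ) Ω (EuclideanSpace ℝ (Fin d)) _ _ _ _ ℋ (fun x => f x.2 x.1) Prod.fst μ _ with hν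
  have hX : @Measurable _ _ _ ℋ (Prod.fst : Ω × ℕ → Ω) := measurable_fst.mono le_rfl hℋ
  have hY : Measurable (fun x : Ω × ℕ => f x.2 x.1) := measurable_from_prod_countable_left hf
  have key : ∀ V, IsOpen V → ∀ B : Set Ω, MeasurableSet[ℋ] B →
      ((∀ᵐ ω ∂P, ω ∈ B → ν ω V = 0) ↔ ∀ᵐ ω ∂P, ω ∈ B → κ ω (hitS V) = 0) := by
    intro V hV B hB
    have a1 := @cd_null (Ω × ℕ) Ω _ ℋ _ _ _ _ _ _ _ _ μ _ _ _ hX hY B hB V hV.measurableSet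
    have a2 := cond_null (P := P) hℋ hκp hκm hκc (meas_hitS hV) (hF V hV) hB
    rw [← a2, ← ae_fst_iff h1 h2 (p := fun ω => ω ∈ B → ν ω V = 0), ← a1,
      ae_prodN_iff h1 h2 (p := fun ω k => ω ∈ B → f k ω ∉ V)]
    apply Filter.eventually_congr
    filter_upwards [hfF] with ω hω
    constructor
    · rintro h hB ⟨y, hy, hyV⟩
      rw [← hω] at hy
      obtain ⟨_, hu, ⟨k, rfl⟩⟩ := mem_closure_iff.1 hy V hV hyV
      exact h k hB hu
    · intro h k hB hk
      refine h hB ⟨_, ?_, hk⟩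
      rw [← hω]
      exact subset_closure ⟨k, rfl⟩
  have hb : ∀ V ∈ TopologicalSpace.countableBasis (EuclideanSpace ℝ (Fin d)),
      ∀ᵐ ω ∂P, (ν ω V = 0 ↔ κ ω (hitS V) = 0) := by
    intro V hV
    have hVo := TopologicalSpace.isOpen_of_mem_countableBasis hV
    have b1 := (key V hVo {ω | ν ω V = 0}
      (@Kernel.measurable_coe _ _ ℋ _ ν _ hVo.measurableSet _ (measurableSet_singleton 0))).1
      (Filter.Eventually.of_forall fun ω h => h)
    have b2 := (key V hVo {ω | κ ω (hitS V) = 0} (hκm _ (meas_hitS hVo) (measurableSet_singleton 0))).2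
      (Filter.Eventually.of_forall fun ω h => h)
    filter_upwards [b1, b2] with ω c1 c2
    exact ⟨c1, c2⟩
  have hb2 := (ae_ball_iff (TopologicalSpace.countable_countableBasis _)).2 hb
  filter_upwards [hb2] with ω hω z
  refine NAm_iff_of_null (fun U hU => ?_) z
  rw [open_null_basis hU]
  constructor
  · intro h
    rw [Set.eq_empty_iff_forall_notMem]
    rintro y ⟨hyK, hyU⟩
    obtain ⟨V, hV, hyV, hVb⟩ := (TopologicalSpace.isBasis_countableBasis
        (EuclideanSpace ℝ (Fin d))).exists_subset_of_mem_open hyU hU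
    have h3 := (hω V hV).1 (h V hV hVb)
    rw [← Kset_hit _ (TopologicalSpace.isOpen_of_mem_countableBasis hV)] at h3
    have : y ∈ Kset (κ ω) ∩ V := ⟨hyK, hyV⟩
    rw [h3] at this; exact this
  · intro h V hV hVU
    rw [Kset_hit _ hU] at h
    exact (hω V hV).2 (measure_mono_null (hitS_mono hVU) h)

end SuppPart

open MeasureTheory
open scoped Classical
set_option linter.unusedSectionVars false
set_option linter.unusedSimpArgs false

section MartPart
open ProbabilityTheory
variable {Ω : Type*} {ℋ mΩ : MeasurableSpace Ω}
variable {E : Type*} [NormedAddCommGroup E] [InnerProductSpace ℝ E] [FiniteDimensional ℝ E]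
  [CompleteSpace E] [SecondCountableTopology E]
  [MeasurableSpace E] [BorelSpace E]

lemma meas_inv_norm {γ : Type*} {mγ : MeasurableSpace γ} {f : γ → E} (h : Measurable f) :
    Measurable fun a => 1 / (1 + ‖f a‖) := measurable_const.div (measurable_const.add h.norm)

lemma sm_of {γ F : Type*} {mγ : MeasurableSpace γ} [NormedAddCommGroup F] [MeasurableSpace F]
    [BorelSpace F] [SecondCountableTopology F] {f : γ → F} (h : Measurable f) :
    StronglyMeasurable f := h.stronglyMeasurable

lemma wd_facts {Q : Measure Ω} {D : Ω → ℝ} (hD : Measurable D) (hpos : ∀ ω, 0 < D ω)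
    (hIntg : Integrable D Q) :
    IsFiniteMeasure (Q.withDensity fun ω => ENNReal.ofReal (D ω)) ∧
    (Q.withDensity fun ω => ENNReal.ofReal (D ω)) ≪ Q ∧
    Q ≪ (Q.withDensity fun ω => ENNReal.ofReal (D ω)) ∧
    (∀ g : Ω → E, Integrable g (Q.withDensity fun ω => ENNReal.ofReal (D ω)) ↔
      Integrable (fun ω => D ω • g ω) Q) ∧
    (∀ (g : Ω → E) (A : Set Ω), MeasurableSet A →
      ∫ ω in A, g ω ∂(Q.withDensity fun ω => ENNReal.ofReal (D ω)) = ∫ ω in A, D ω • g ω ∂Q) := by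
  have hDm : Measurable fun ω => ENNReal.ofReal (D ω) := hD.ennreal_ofReal
  refine ⟨isFiniteMeasure_withDensity_ofReal hIntg.2, withDensity_absolutelyContinuous _ _,
    withDensity_absolutelyContinuous' hDm.aemeasurable (Filter.Eventually.of_forall fun ω => ?_),
    fun g => ?_, fun g A hA => ?_⟩
  · simp [hpos ω]
  · rw [integrable_withDensity_iff_integrable_smul' hDm (by simp)]
    simp only [ENNReal.toReal_ofReal (hpos _).le]
  · rw [setIntegral_withDensity_eq_setIntegral_toReal_smul hDm (by simp) g hA]
    simp only [ENNReal.toReal_ofReal (hpos _).le]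

lemma pull_out (hℋ : ℋ ≤ mΩ) {Q : Measure Ω} [IsFiniteMeasure Q] {g : Ω → E} (hg : Integrable g Q)
    (h0 : ∀ A, MeasurableSet[ℋ] A → ∫ ω in A, g ω ∂Q = 0) {D : Ω → ℝ} (hD : Measurable[ℋ] D)
    (hb : ∀ ω, |D ω| ≤ 1) {A : Set Ω} (hA : MeasurableSet[ℋ] A) :
    ∫ ω in A, D ω • g ω ∂Q = 0 := by
  have h1 : (0 : Ω → E) =ᵐ[Q] Q[g | ℋ] := by
    refine ae_eq_condExp_of_forall_setIntegral_eq hℋ hg ?_ ?_ ?_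
    · intros; exact (integrable_zero _ _ _).integrableOn
    · intro s hs _; simp [h0 s hs]
    · exact stronglyMeasurable_zero.aestronglyMeasurable
  have hi : Integrable (D • g) Q := by
    refine Integrable.bdd_smul hg 1 (hD.mono hℋ le_rfl).aestronglyMeasurable ?_
    exact Filter.Eventually.of_forall fun ω => by simpa using hb ω
  have h2 : Q[D • g | ℋ] =ᵐ[Q] D • Q[g | ℋ] :=
    condExp_smul_of_aestronglyMeasurable_left (m := ℋ)
      (sm_of hD).aestronglyMeasurable hi hg
  change ∫ ω in A, (D • g) ω ∂Q = 0
  rw [← setIntegral_condExp hℋ hi hA]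
  rw [setIntegral_eq_zero_of_ae_eq_zero]
  filter_upwards [h1, h2] with ω e1 e2 _
  rw [e2, Pi.smul_apply', ← e1]; simp

lemma back_pass {P : Measure Ω} [IsProbabilityMeasure P] {N : ℕ}
    (ℱ : ℕ → MeasurableSpace Ω) (hmono : Monotone ℱ) (hle : ∀ n, ℱ n ≤ mΩ)
    (x : ℕ → Ω → E) (hx : ∀ n, n ≤ N → Measurable[ℱ n] (x n))
    (hR : ∀ n, n + 1 ≤ N → ∃ ρ : Measure Ω, IsFiniteMeasure ρ ∧ ρ ≪ P ∧ P ≪ ρ ∧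
      Integrable (fun ω => x (n + 1) ω - x n ω) ρ ∧
      ∀ A, MeasurableSet[ℱ n] A → ∫ ω in A, (x (n + 1) ω - x n ω) ∂ρ = 0) :
    ∃ Q : Measure Ω, IsProbabilityMeasure Q ∧ Q ≪ P ∧ P ≪ Q ∧
      (∀ n, n ≤ N → Integrable (x n) Q) ∧
      ∀ n, 1 ≤ n → n ≤ N → x (n - 1) =ᵐ[Q] Q[x n | ℱ (n - 1)] := by
  have hxm : ∀ n, n ≤ N → Measurable (x n) := fun n hn => (hx n hn).mono (hle n) le_rfl
  have claim : ∀ m, m ≤ N → ∃ Q : Measure Ω, IsFiniteMeasure Q ∧ Q ≪ P ∧ P ≪ Q ∧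
      (∀ k, N - m ≤ k → k ≤ N → Integrable (x k) Q) ∧
      ∀ k, N - m ≤ k → k + 1 ≤ N → ∀ A, MeasurableSet[ℱ k] A →
        ∫ ω in A, (x (k + 1) ω - x k ω) ∂Q = 0 := by
    intro m
    induction m with
    | zero =>
      intro _
      have hm := hxm N le_rfl
      set D : Ω → ℝ := fun ω => 1 / (1 + ‖x N ω‖) with hDdef
      have hDm : Measurable D := measurable_const.div (measurable_const.add hm.norm)
      have hDpos : ∀ ω, 0 < D ω := fun ω => by simp only [hDdef]; positivity
      have hDle : ∀ ω, D ω ≤ 1 := fun ω => by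
        simp only [hDdef]; rw [div_le_one (by positivity)]; linarith [norm_nonneg (x N ω)]
      have hDi : Integrable D P := Integrable.of_bound hDm.aestronglyMeasurable 1
        (Filter.Eventually.of_forall fun ω => by
          rw [Real.norm_of_nonneg (hDpos ω).le]; exact hDle ω)
      obtain ⟨f1, f2, f3, f4, f5⟩ := wd_facts (E := E) hDm hDpos hDi
      refine ⟨_, f1, f2, f3, fun k hk1 hk2 => ?_, fun k hk1 hk2 => by omega⟩
      obtain rfl : k = N := by omega
      rw [f4]
      refine Integrable.of_bound (hDm.smul hm).aestronglyMeasurable 1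
        (Filter.Eventually.of_forall fun ω => ?_)
      rw [norm_smul, Real.norm_of_nonneg (hDpos ω).le]
      simp only [hDdef]
      rw [one_div, inv_mul_le_one₀ (by positivity)]
      linarith
    | succ m ih =>
      intro hm
      obtain ⟨Q, q1, q2, q3, q4, q5⟩ := ih (by omega)
      obtain ⟨n, hn⟩ : ∃ n, N - (m + 1) = n := ⟨_, rfl⟩
      have hn1 : N - m = n + 1 := by omega
      have hnN : n + 1 ≤ N := by omega
      rw [hn]; rw [hn1] at q4 q5
      obtain ⟨R, r1, r2, r3, r4, r5⟩ := hR n hnN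
      have hz := hx n (by omega)
      have hzm := hxm n (by omega)
      have hY := hxm (n + 1) hnN
      have hid : @Measurable Ω Ω mΩ (ℱ n) id := measurable_id.mono (hle n) le_rfl
      have hU := @lemU Ω Ω mΩ (ℱ n) E _ _ _ _ _ _ _ R _ id (x (n + 1)) hid hY (x n) hz r4 r5
      have hV := @lemV' Ω Ω mΩ (ℱ n) E _ _ _ _ _ _ _ R Q _ _ (r2.trans q3) (q2.trans r3) id
        (x (n + 1)) hid hY (x n) hU
      obtain ⟨q, hq, hq2⟩ := @lemT Ω Ω mΩ (ℱ n) E _ _ _ _ _ _ _ Q _ id (x (n + 1)) hid hY (x n) hz hV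
      simp only [id, Set.preimage_id'] at hq2
      have hqm : Measurable q := hq.mono (hle n) le_rfl
      set T : Ω → ℝ := fun ω => dk (q ω) (x n ω) (x (n + 1) ω) with hT
      set S : Ω → ℝ := fun ω => 1 / (1 + ‖x n ω‖) with hS
      have hTm : Measurable T := meas_dk hqm hzm hY
      have hTm' : Measurable[ℱ (n + 1)] T :=
        meas_dk (hq.mono (hmono (Nat.le_succ n)) le_rfl) (hz.mono (hmono (Nat.le_succ n)) le_rfl)
          (hx _ hnN)
      have hSm' : Measurable[ℱ n] S := meas_inv_norm hz
      have hSm : Measurable S := hSm'.mono (hle n) le_rfl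
      have hTp : ∀ ω, 0 < T ω := fun ω => dk_pos _ _ _
      have hTl : ∀ ω, T ω ≤ 1 := fun ω => dk_le_one _ _ _
      have hSp : ∀ ω, 0 < S ω := fun ω => by simp only [hS]; positivity
      have hSl : ∀ ω, S ω ≤ 1 := fun ω => by
        simp only [hS]; rw [div_le_one (by positivity)]; linarith [norm_nonneg (x n ω)]
      set D : Ω → ℝ := fun ω => S ω * T ω with hDdef
      have hDm : Measurable D := hSm.mul hTm
      have hDm' : Measurable[ℱ (n + 1)] D := (hSm'.mono (hmono (Nat.le_succ n)) le_rfl).mul hTm'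
      have hDp : ∀ ω, 0 < D ω := fun ω => mul_pos (hSp ω) (hTp ω)
      have hDl : ∀ ω, D ω ≤ 1 := fun ω => mul_le_one₀ (hSl ω) (hTp ω).le (hTl ω)
      have hDa : ∀ ω, |D ω| ≤ 1 := fun ω => by rw [abs_of_pos (hDp ω)]; exact hDl ω
      have hDi : Integrable D Q := Integrable.of_bound hDm.aestronglyMeasurable 1
        (Filter.Eventually.of_forall fun ω => hDa ω)
      obtain ⟨f1, f2, f3, f4, f5⟩ := wd_facts (E := E) hDm hDp hDi
      refine ⟨_, f1, f2.trans q2, q3.trans f3, fun k hk1 hk2 => ?_, fun k hk1 hk2 A hA => ?_⟩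
      · rw [f4]
        rcases hk1.eq_or_lt with rfl | hlt
        · refine Integrable.of_bound (hDm.smul hzm).aestronglyMeasurable 1
            (Filter.Eventually.of_forall fun ω => ?_)
          rw [norm_smul, Real.norm_of_nonneg (hDp ω).le]
          have h1 : S ω * ‖x n ω‖ ≤ 1 := by
            simp only [hS]
            rw [one_div, inv_mul_le_one₀ (by positivity)]
            linarith
          calc D ω * ‖x n ω‖ = T ω * (S ω * ‖x n ω‖) := by simp only [hDdef]; ring
            _ ≤ 1 := mul_le_one₀ (hTl ω) (mul_nonneg (hSp ω).le (norm_nonneg _)) h1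
        · exact Integrable.bdd_smul (q4 k hlt hk2) 1 hDm.aestronglyMeasurable
            (Filter.Eventually.of_forall fun ω => hDa ω)
      · rw [f5 _ _ (hle _ _ hA)]
        rcases hk1.eq_or_lt with rfl | hlt
        · have hgi : Integrable (fun ω => T ω • (x (n + 1) ω - x n ω)) Q := by
            refine Integrable.of_bound (hTm.smul (hY.sub hzm)).aestronglyMeasurable 1
              (Filter.Eventually.of_forall fun ω => norm_dk_smul_le _ _ _)
          have := pull_out (hle n) hgi hq2 hSm'
            (fun ω => by rw [abs_of_pos (hSp ω)]; exact hSl ω) hA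
          simpa only [hDdef, smul_smul] using this
        · exact pull_out (hle k) ((q4 (k + 1) (by omega) hk2).sub (q4 k hlt (by omega)))
            (q5 k hlt hk2) (hDm'.mono (hmono hlt) le_rfl) hDa hA
  obtain ⟨Q, q1, q2, q3, q4, q5⟩ := claim N le_rfl
  have hQ0 : Q Set.univ ≠ 0 := by
    intro h
    have := q3 h
    simp at this
  have hQt : Q Set.univ ≠ ⊤ := measure_ne_top _ _
  have hc0 : (Q Set.univ)⁻¹ ≠ 0 := ENNReal.inv_ne_zero.2 hQt
  have hct : (Q Set.univ)⁻¹ ≠ ⊤ := ENNReal.inv_ne_top.2 hQ0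
  have hac : (Q Set.univ)⁻¹ • Q ≪ Q := Measure.smul_absolutelyContinuous
  have hac' : Q ≪ (Q Set.univ)⁻¹ • Q := Measure.absolutelyContinuous_smul hc0
  have hp : IsProbabilityMeasure ((Q Set.univ)⁻¹ • Q) :=
    ⟨by simp [ENNReal.inv_mul_cancel hQ0 hQt]⟩
  have hIntg : ∀ n, n ≤ N → Integrable (x n) ((Q Set.univ)⁻¹ • Q) := fun n hn =>
    (q4 n (by omega) hn).smul_measure hct
  refine ⟨(Q Set.univ)⁻¹ • Q, hp, hac.trans q2, q3.trans hac', hIntg, ?_⟩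
  intro n hn1 hnN
  obtain ⟨k, rfl⟩ : ∃ k, n = k + 1 := ⟨n - 1, by omega⟩
  simp only [Nat.add_sub_cancel]
  refine ae_eq_condExp_of_forall_setIntegral_eq (hle k) (hIntg _ hnN) ?_ ?_ ?_
  · intro s _ _; exact (hIntg k (by omega)).integrableOn
  · intro s hs _
    have h0 := q5 k (by omega) hnN s hs
    rw [integral_sub (q4 (k + 1) (by omega) hnN).integrableOn (q4 k (by omega) (by omega)).integrableOn] at h0
    rw [Measure.restrict_smul, integral_smul_measure, integral_smul_measure, sub_eq_zero.1 h0]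
  · exact (sm_of (hx k (by omega))).aestronglyMeasurable

end MartPart

open MeasureTheory
open scoped Classical
set_option linter.unusedSectionVars false
set_option linter.unusedSimpArgs false

section BaryPart
open ProbabilityTheory
variable {β : Type*} [MeasurableSpace β]
variable {E : Type*} [NormedAddCommGroup E] [InnerProductSpace ℝ E] [FiniteDimensional ℝ E]
  [CompleteSpace E] [SecondCountableTopology E]
  [MeasurableSpace E] [BorelSpace E]

lemma hG_shift (ν : Measure E) [IsFiniteMeasure ν] (q z w : E) :
    hG ν q z = hG ν q w + (∫ y, gk q y ∂ν) • (w - z) := by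
  unfold hG
  rw [← integral_smul_const, ← integral_add (integrable_gk_smul ν q w)
    ((integrable_gk ν q).smul_const _)]
  congr 1
  ext y
  rw [← smul_add]; congr 1; abel

lemma int_gk_pos (ν : Measure E) [IsFiniteMeasure ν] (hν : ν ≠ 0) (q : E) : 0 < ∫ y, gk q y ∂ν := by
  rw [integral_pos_iff_support_of_nonneg (fun y => (gk_pos q y).le) (integrable_gk ν q)]
  have : Function.support (gk q) = Set.univ := by
    ext y; simp [(gk_pos q y).ne']
  rw [this]
  exact Measure.measure_univ_pos.2 hν

lemma measurable_int_gk (ν : Kernel β E) [IsFiniteKernel ν] {q : β → E} (hq : Measurable q) :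
    Measurable fun b => ∫ y, gk (q b) y ∂(ν b) := by
  have h : Measurable (fun x : β × E => gk (q x.1) x.2) :=
    continuous_gk.measurable.comp ((hq.comp measurable_fst).prodMk measurable_snd)
  exact (h.stronglyMeasurable.integral_kernel_prod_right' (κ := ν)).measurable

lemma seqKer_ne (f : ℕ → β → E) (hf : ∀ k, Measurable (f k)) (b : β) : seqKer f hf b ≠ 0 := by
  intro h
  have h1 : (cN.map fun k => f k b) Set.univ = 0 := by
    change (seqKer f hf b) Set.univ = 0
    rw [h]; simp
  rw [Measure.map_apply measurable_from_nat MeasurableSet.univ] at h1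
  exact cN_ne 0 (measure_mono_null (Set.subset_univ _) h1)

lemma bary (f : ℕ → β → E) (hf : ∀ k, Measurable (f k)) {q : β → E} (hq : Measurable q) :
    ∃ x : β → E, Measurable x ∧ ∀ b, hG (seqKer f hf b) (q b) (x b) = 0 := by
  refine ⟨fun b => (∫ y, gk (q b) y ∂(seqKer f hf b))⁻¹ • hG (seqKer f hf b) (q b) 0,
    (measurable_int_gk _ hq).inv.smul (measurable_hG _ hq measurable_const), fun b => ?_⟩
  rw [hG_shift _ _ _ 0, zero_sub, smul_neg, smul_smul,
    mul_inv_cancel₀ (int_gk_pos _ (seqKer_ne f hf b) _).ne', one_smul, add_neg_cancel]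

lemma NAs_of_hG_seq (f : ℕ → β → E) (hf : ∀ k, Measurable (f k)) {b : β} {q x : E}
    (h : hG (seqKer f hf b) q x = 0) : NAs (Set.range fun k => f k b) x :=
  (NAm_map_cN _ _).1 (NAm_of_hG h)

lemma bary_sel (F : β → Set E) (hcl : ∀ b, IsClosed (F b)) (hne : ∀ b, (F b).Nonempty)
    (hF : ∀ V, IsOpen V → MeasurableSet {b | (F b ∩ V).Nonempty}) :
    ∃ x : β → E, Measurable x ∧ ∀ b, NAs (F b) (x b) := by
  obtain ⟨f, hf, hfF⟩ := exists_castaing F hne hF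
  obtain ⟨x, hx, hx2⟩ := bary f hf (q := fun _ => 0) measurable_const
  exact ⟨x, hx, fun b => NAs_congr_of_closure (hfF b) (NAs_of_hG_seq f hf (hx2 b))⟩

/-- measurability of the hits of `cl (G ∩ ri conv K)` -/
lemma meas_W_hit (G K : β → Set E) (hGne : ∀ b, (G b).Nonempty) (hGc : ∀ b, Convex ℝ (G b))
    (hGr : ∀ b, G b = intrinsicInterior ℝ (G b))
    (hG' : ∀ V, IsOpen V → MeasurableSet {b | (G b ∩ V).Nonempty})
    (hKne : ∀ b, (K b).Nonempty)
    (hK : ∀ V, IsOpen V → MeasurableSet {b | (K b ∩ V).Nonempty}) {V : Set E} (hV : IsOpen V) :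
    MeasurableSet {b | (closure (G b ∩ intrinsicInterior ℝ (convexHull ℝ (K b))) ∩ V).Nonempty} := by
  obtain ⟨g, hg, hgG⟩ := exists_castaing G hGne hG'
  obtain ⟨k, hk, hkK⟩ := exists_castaing K hKne hK
  have := meas_inter_hit (seqKer g hg) (seqKer k hk) hV
  convert this using 1
  ext b
  simp only [Set.mem_ofPred_eq]
  have e1 : ∀ z, NAm (seqKer g hg b) z ↔ z ∈ G b := by
    intro z
    change NAm (cN.map fun k => g k b) z ↔ _
    rw [NAm_map_cN]
    constructor
    · intro h
      rw [hGr b]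
      exact mem_ri_of_NAs (hGc b) (hGne b) (NAs_congr_of_closure (hgG b) h)
    · intro h
      rw [hGr b] at h
      exact NAs_congr_of_closure (hgG b).symm (NAs_of_mem_ri h)
  have e2 : ∀ z, NAm (seqKer k hk b) z ↔ z ∈ intrinsicInterior ℝ (convexHull ℝ (K b)) := by
    intro z
    change NAm (cN.map fun i => k i b) z ↔ _
    rw [NAm_map_cN]
    constructor
    · intro h
      exact mem_ri_of_NAs (convex_convexHull ℝ _) (hKne b).convexHull
        (NAs_convexHull (NAs_congr_of_closure (hkK b) h))
    · intro h
      exact NAs_congr_of_closure (hkK b).symm (NAs_of_convexHull (NAs_of_mem_ri h))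
  simp only [e1, e2]
  rw [closure_inter_open_nonempty_iff hV]
  constructor
  · rintro ⟨z, ⟨h1, h2⟩, h3⟩; exact ⟨z, h3, h1, h2⟩
  · rintro ⟨z, h3, h1, h2⟩; exact ⟨z, ⟨h1, h2⟩, h3⟩

end BaryPart

section StepPart
open ProbabilityTheory
variable {d : ℕ} {Ω : Type*} {ℋ 𝒢 mΩ : MeasurableSpace Ω} {P : Measure Ω} [IsProbabilityMeasure P]

lemma forward_step (hℋ : ℋ ≤ 𝒢) (h𝒢 : 𝒢 ≤ mΩ) {F : Ω → CL d} {κ : Ω → Measure (CL d)}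
    (hκp : ∀ ω, IsProbabilityMeasure (κ ω))
    (hκm : ∀ C, MeasurableSet C → Measurable[ℋ] fun ω => κ ω C)
    (hκc : ∀ C, MeasurableSet C → (fun ω => (κ ω C).toReal) =ᵐ[P]
        P[fun ω => if F ω ∈ C then (1 : ℝ) else 0 | ℋ])
    (hF : ∀ V : Set (EuclideanSpace ℝ (Fin d)), IsOpen V →
      MeasurableSet[𝒢] {ω | ((F ω).1 ∩ V).Nonempty})
    {z : Ω → EuclideanSpace ℝ (Fin d)} (hz : Measurable[ℋ] z)
    (hzK : ∀ᵐ ω ∂P, NAs (Kset (κ ω)) (z ω)) :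
    ∃ x : Ω → EuclideanSpace ℝ (Fin d), Measurable[𝒢] x ∧ (∀ ω, NAs (F ω).1 (x ω)) ∧
      ∃ ρ : Measure Ω, IsFiniteMeasure ρ ∧ ρ ≪ P ∧ P ≪ ρ ∧
        Integrable (fun ω => x ω - z ω) ρ ∧
        ∀ A, MeasurableSet[ℋ] A → ∫ ω in A, (x ω - z ω) ∂ρ = 0 := by
  have hℋm : ℋ ≤ mΩ := hℋ.trans h𝒢
  obtain ⟨f, hf, hfF⟩ := @exists_castaing Ω 𝒢 (EuclideanSpace ℝ (Fin d)) _ _ _ _ _ _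
    (fun ω => (F ω).1) (fun ω => (F ω).2.2) hF
  have hfm : ∀ k, Measurable (f k) := fun k => (hf k).mono h𝒢 le_rfl
  have hfF' : ∀ ω, closure (Set.range fun k => f k ω) = (F ω).1 := fun ω => by
    rw [hfF ω, (F ω).2.1.closure_eq]
  have hs := supp_lem (P := P) hℋm hκp hκm hκc (fun V hV => h𝒢 _ (hF V hV)) hfm
    (Filter.Eventually.of_forall hfF') (μ := P.prod cN) Measure.AbsolutelyContinuous.rfl
    Measure.AbsolutelyContinuous.rfl
  have hX : @Measurable _ _ _ ℋ (Prod.fst : Ω × ℕ → Ω) := measurable_fst.mono le_rfl hℋm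
  have hY : Measurable (fun x : Ω × ℕ => f x.2 x.1) := measurable_from_prod_countable_left hfm
  have hNA : ∀ᵐ ω ∂P, NAm (@condDistrib (Ω × ℕ) Ω (EuclideanSpace ℝ (Fin d)) _ _ _ _ ℋ
      (fun x => f x.2 x.1) Prod.fst (P.prod cN) _ ω) (z ω) := by
    filter_upwards [hs, hzK] with ω h1 h2
    exact (h1 _).2 h2
  have hNA' := (ae_fst_iff (P := P) Measure.AbsolutelyContinuous.rfl
    Measure.AbsolutelyContinuous.rfl).2 hNA
  obtain ⟨q, hq, hq2⟩ := @lemT (Ω × ℕ) Ω _ ℋ _ _ _ _ _ _ _ _ (P.prod cN) _ Prod.fst _ hX hY z hz hNA'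
  obtain ⟨x, hx, hx2⟩ := @bary Ω 𝒢 _ _ _ _ _ _ _ _ f hf q (hq.mono hℋ le_rfl)
  have hqm : Measurable q := hq.mono hℋm le_rfl
  have hzm : Measurable z := hz.mono hℋm le_rfl
  have hxm : Measurable x := hx.mono h𝒢 le_rfl
  have hx3 : ∀ ω, hG (seqKer f hfm ω) (q ω) (x ω) = 0 := hx2
  refine ⟨x, hx, fun ω => NAs_congr_of_closure ((hfF' ω).trans (F ω).2.1.closure_eq.symm)
    (NAs_of_hG_seq f hfm (hx3 ω)), ?_⟩
  set c : Ω → ℝ := fun ω => (1 + ‖z ω - q ω‖)⁻¹ with hc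
  have hcpos : ∀ ω, 0 < c ω := fun ω => by simp only [hc]; positivity
  have hcle : ∀ ω, c ω ≤ 1 := fun ω => by
    simp only [hc]; rw [inv_le_one₀ (by positivity)]; linarith [norm_nonneg (z ω - q ω)]
  have hcm : Measurable c := (measurable_const.add (hzm.sub hqm).norm).inv
  set m : Ω → ℝ := fun ω => ∫ y, gk (q ω) y ∂(seqKer f hfm ω) with hm
  have hmm : Measurable m := measurable_int_gk _ hqm
  have hmpos : ∀ ω, 0 < m ω := fun ω => int_gk_pos _ (seqKer_ne f hfm ω) _
  have hmle : ∀ ω, m ω ≤ cN.real Set.univ := fun ω => by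
    have h1 : m ω ≤ ∫ y, (1 : ℝ) ∂(seqKer f hfm ω) :=
      integral_mono (integrable_gk _ _) (integrable_const _) fun y => gk_le_one _ _
    refine h1.trans (le_of_eq ?_)
    rw [integral_const, smul_eq_mul, mul_one]
    change (cN.map fun k => f k ω).real Set.univ = _
    rw [map_measureReal_apply measurable_from_nat MeasurableSet.univ]; simp
  set Z : Ω → ℝ := fun ω => c ω * m ω with hZ
  have hZm : Measurable Z := hcm.mul hmm
  have hZpos : ∀ ω, 0 < Z ω := fun ω => mul_pos (hcpos ω) (hmpos ω)
  have hZi : Integrable Z P := by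
    refine Integrable.of_bound hZm.aestronglyMeasurable (cN.real Set.univ)
      (Filter.Eventually.of_forall fun ω => ?_)
    rw [Real.norm_of_nonneg (hZpos ω).le]
    calc Z ω ≤ 1 * m ω := mul_le_mul_of_nonneg_right (hcle ω) (hmpos ω).le
      _ ≤ _ := by rw [one_mul]; exact hmle ω
  have hZx : ∀ ω, Z ω • (x ω - z ω) = ∫ k, dk (q ω) (z ω) (f k ω) • (f k ω - z ω) ∂cN := by
    intro ω
    have h1 := hG_shift (seqKer f hfm ω) (q ω) (z ω) (x ω)
    rw [hx3 ω, zero_add] at h1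
    have h2 : hG (seqKer f hfm ω) (q ω) (z ω) = ∫ k, gk (q ω) (f k ω) • (f k ω - z ω) ∂cN :=
      hG_map_cN _ _ _
    have h3 : Z ω • (x ω - z ω) = c ω • (m ω • (x ω - z ω)) := by rw [smul_smul]
    rw [h3, ← h1, h2, ← integral_smul]
    congr 1
    ext1 k
    rw [smul_smul, hc, dk, div_eq_inv_mul]
  have hφm : Measurable fun a : Ω × ℕ => dk (q a.1) (z a.1) (f a.2 a.1) • (f a.2 a.1 - z a.1) :=
    (meas_dk (hqm.comp measurable_fst) (hzm.comp measurable_fst) hY).smul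
      (hY.sub (hzm.comp measurable_fst))
  have hφi : Integrable (fun a : Ω × ℕ => dk (q a.1) (z a.1) (f a.2 a.1) • (f a.2 a.1 - z a.1))
      (P.prod cN) := Integrable.of_bound hφm.aestronglyMeasurable 1
        (Filter.Eventually.of_forall fun a => norm_dk_smul_le _ _ _)
  obtain ⟨f1, f2, f3, f4, f5⟩ := wd_facts (E := EuclideanSpace ℝ (Fin d)) hZm hZpos hZi
  refine ⟨_, f1, f2, f3, ?_, fun A hA => ?_⟩
  · rw [f4]
    simp only [hZx]
    exact hφi.integral_prod_left
  · rw [f5 _ _ (hℋm _ hA)]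
    simp only [hZx]
    have h1 := hq2 A hA
    have h2 : (Prod.fst ⁻¹' A : Set (Ω × ℕ)) = A ×ˢ Set.univ := by ext a; simp
    rw [h2, setIntegral_prod _ hφi.integrableOn] at h1
    simpa using h1

end StepPart

open MeasureTheory
open scoped Classical
set_option linter.unusedSectionVars false
set_option linter.unusedSimpArgs false

section BackStepPart
open ProbabilityTheory
variable {d : ℕ} {Ω : Type*} {ℋ mΩ : MeasurableSpace Ω} {P : Measure Ω} [IsProbabilityMeasure P]

lemma backward_step (hℋ : ℋ ≤ mΩ) {F : Ω → CL d} {κ : Ω → Measure (CL d)}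
    (hκp : ∀ ω, IsProbabilityMeasure (κ ω))
    (hκm : ∀ C, MeasurableSet C → Measurable[ℋ] fun ω => κ ω C)
    (hκc : ∀ C, MeasurableSet C → (fun ω => (κ ω C).toReal) =ᵐ[P]
        P[fun ω => if F ω ∈ C then (1 : ℝ) else 0 | ℋ])
    (hF : ∀ V : Set (EuclideanSpace ℝ (Fin d)), IsOpen V →
      MeasurableSet {ω | ((F ω).1 ∩ V).Nonempty})
    {Q : Measure Ω} [IsFiniteMeasure Q] (hQP : Q ≪ P) (hPQ : P ≪ Q)
    {x z : Ω → EuclideanSpace ℝ (Fin d)} (hx : Measurable x) (hz : Measurable[ℋ] z)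
    (hi : Integrable (fun ω => x ω - z ω) Q)
    (h0 : ∀ A, MeasurableSet[ℋ] A → ∫ ω in A, (x ω - z ω) ∂Q = 0)
    (hxF : ∀ᵐ ω ∂P, x ω ∈ (F ω).1) (hxN : ∀ᵐ ω ∂P, NAs (F ω).1 (x ω)) :
    ∀ᵐ ω ∂P, NAs (Kset (κ ω)) (z ω) := by
  have hzm : Measurable z := hz.mono hℋ le_rfl
  obtain ⟨f₀, hf₀, hf₀F⟩ := exists_castaing (fun ω => (F ω).1) (fun ω => (F ω).2.2) hF
  let f : ℕ → Ω → EuclideanSpace ℝ (Fin d) := fun k => Nat.casesOn k x f₀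
  have hfm : ∀ k, Measurable (f k) := fun k => by
    cases k with
    | zero => exact hx
    | succ k => exact hf₀ k
  have hf0 : ∀ ω, f 0 ω = x ω := fun ω => rfl
  have hfF : ∀ᵐ ω ∂P, closure (Set.range fun k => f k ω) = (F ω).1 := by
    filter_upwards [hxF] with ω hω
    have hcl := hf₀F ω
    rw [(F ω).2.1.closure_eq] at hcl
    apply subset_antisymm
    · refine closure_minimal ?_ (F ω).2.1
      rintro _ ⟨k, rfl⟩
      cases k with
      | zero => exact hω
      | succ k => rw [← hcl]; exact subset_closure ⟨k, rfl⟩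
    · rw [← hcl]
      refine closure_mono ?_
      rintro _ ⟨k, rfl⟩
      exact ⟨k + 1, rfl⟩
  have hX : @Measurable _ _ _ ℋ (Prod.fst : Ω × ℕ → Ω) := measurable_fst.mono le_rfl hℋ
  have hY : Measurable (fun x : Ω × ℕ => f x.2 x.1) := measurable_from_prod_countable_left hfm
  obtain ⟨q, hq, hq2⟩ := exists_meas_q (seqKer f hfm) hx
  have hq3 : ∀ᵐ ω ∂P, hG (seqKer f hfm ω) (q ω) (x ω) = 0 := by
    filter_upwards [hfF, hxN] with ω h1 h2
    refine hq2 ω ((NAm_map_cN _ _).2 ?_)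
    exact NAs_congr_of_closure (by rw [h1, (F ω).2.1.closure_eq]) h2
  -- the density
  set s : Ω → ℝ := fun ω => (1 + ‖x ω - q ω‖)⁻¹ with hs
  have hspos : ∀ ω, 0 < s ω := fun ω => by simp only [hs]; positivity
  have hsm : Measurable s := (measurable_const.add (hx.sub hq).norm).inv
  set m : Ω → ℝ := fun ω => ∫ y, gk (q ω) y ∂(seqKer f hfm ω) with hm
  have hmm : Measurable m := measurable_int_gk _ hq
  have hmpos : ∀ ω, 0 < m ω := fun ω => int_gk_pos _ (seqKer_ne f hfm ω) _
  set c0 : ℝ := cN.real {0} with hc0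
  have hc0pos : 0 < c0 := ENNReal.toReal_pos (cN_ne 0) (measure_ne_top _ _)
  have hden : ∀ ω, 0 < c0 + s ω * m ω := fun ω => add_pos hc0pos (mul_pos (hspos ω) (hmpos ω))
  set i0 : ℕ → ℝ := fun k => if k = 0 then 1 else 0 with hi0
  have hi0n : ∀ k, 0 ≤ i0 k := fun k => by simp only [hi0]; split_ifs <;> simp
  have hi0l : ∀ k, i0 k ≤ 1 := fun k => by simp only [hi0]; split_ifs <;> simp
  set t : Ω × ℕ → ℝ := fun a => dk (q a.1) (x a.1) (f a.2 a.1) with ht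
  have htm : Measurable t := meas_dk (hq.comp measurable_fst) (hx.comp measurable_fst) hY
  have htpos : ∀ a, 0 < t a := fun a => dk_pos _ _ _
  have htl : ∀ a, t a ≤ 1 := fun a => dk_le_one _ _ _
  set Z : Ω × ℕ → ℝ := fun a => (c0 + s a.1 * m a.1)⁻¹ * (i0 a.2 + t a) with hZ
  have hZm : Measurable Z := by
    refine Measurable.mul ?_ ?_
    · exact (measurable_const.add ((hsm.comp measurable_fst).mul (hmm.comp measurable_fst))).inv
    · have h9 : Measurable fun a : Ω × ℕ => i0 a.2 :=
        (measurable_from_nat (f := i0)).comp measurable_snd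
      exact h9.add htm
  have hZpos : ∀ a, 0 < Z a := fun a =>
    mul_pos (inv_pos.2 (hden _)) (add_pos_of_nonneg_of_pos (hi0n _) (htpos a))
  have hinv : ∀ ω, (c0 + s ω * m ω)⁻¹ ≤ c0⁻¹ := fun ω =>
    inv_anti₀ hc0pos (by linarith [mul_pos (hspos ω) (hmpos ω)])
  have hZle : ∀ a, Z a ≤ c0⁻¹ * 2 := fun a =>
    mul_le_mul (hinv _) (by linarith [hi0l a.2, htl a]) (add_nonneg (hi0n _) (htpos a).le)
      (inv_nonneg.2 hc0pos.le)
  have hZi : Integrable Z (Q.prod cN) := Integrable.of_bound hZm.aestronglyMeasurable (c0⁻¹ * 2)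
    (Filter.Eventually.of_forall fun a => by
      rw [Real.norm_of_nonneg (hZpos a).le]; exact hZle a)
  set φ : Ω × ℕ → EuclideanSpace ℝ (Fin d) := fun a => Z a • (f a.2 a.1 - z a.1) with hφ
  have hφm : Measurable φ := hZm.smul (hY.sub (hzm.comp measurable_fst))
  have hφb : ∀ a, ‖φ a‖ ≤ c0⁻¹ + c0⁻¹ * 2 * ‖x a.1 - z a.1‖ := by
    intro a
    have e : φ a = Z a • (f a.2 a.1 - x a.1) + Z a • (x a.1 - z a.1) := by
      rw [← smul_add]; simp only [hφ]; congr 1; abel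
    rw [e]
    refine (norm_add_le _ _).trans (add_le_add ?_ ?_)
    · have e2 : Z a • (f a.2 a.1 - x a.1)
          = (c0 + s a.1 * m a.1)⁻¹ • (t a • (f a.2 a.1 - x a.1)) := by
        by_cases hk : a.2 = 0
        · have : f a.2 a.1 - x a.1 = 0 := by rw [hk, hf0, sub_self]
          rw [this]; simp
        · simp only [hZ, hi0]; rw [if_neg hk, zero_add, smul_smul]
      rw [e2, norm_smul, Real.norm_of_nonneg (inv_nonneg.2 (hden _).le)]
      calc _ ≤ c0⁻¹ * 1 := mul_le_mul (hinv _) (norm_dk_smul_le _ _ _) (norm_nonneg _)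
            (inv_nonneg.2 hc0pos.le)
        _ = c0⁻¹ := mul_one _
    · rw [norm_smul, Real.norm_of_nonneg (hZpos a).le]
      exact mul_le_mul_of_nonneg_right (hZle a) (norm_nonneg _)
  have hφi : Integrable φ (Q.prod cN) := by
    refine Integrable.mono' (g := fun a => c0⁻¹ + c0⁻¹ * 2 * ‖x a.1 - z a.1‖) ?_
      hφm.aestronglyMeasurable (Filter.Eventually.of_forall hφb)
    exact (integrable_const _).add ((hi.norm.comp_fst cN).const_mul _)
  have hφint : ∀ᵐ ω ∂Q, ∫ k, φ (ω, k) ∂cN = x ω - z ω := by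
    filter_upwards [hQP.ae_le hq3] with ω hω
    have h1 := hG_shift (seqKer f hfm ω) (q ω) (z ω) (x ω)
    rw [hω, zero_add] at h1
    have h2 : hG (seqKer f hfm ω) (q ω) (z ω) = ∫ k, gk (q ω) (f k ω) • (f k ω - z ω) ∂cN :=
      hG_map_cN _ _ _
    have h3 : ∫ k, t (ω, k) • (f k ω - z ω) ∂cN = (s ω * m ω) • (x ω - z ω) := by
      rw [mul_smul, ← h1, h2, ← integral_smul]
      congr 1
      ext1 k
      simp only [ht, hs, dk]
      rw [smul_smul, div_eq_inv_mul]
    have h4 : ∫ k, i0 k • (f k ω - z ω) ∂cN = c0 • (x ω - z ω) := by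
      have : (fun k => i0 k • (f k ω - z ω)) = Set.indicator {0} (fun _ => x ω - z ω) := by
        ext1 k
        by_cases hk : k = 0
        · subst hk; simp [hi0, hf0]
        · simp [hi0, hk]
      rw [this, integral_indicator_const _ (measurableSet_singleton 0)]
    have i4 : Integrable (fun k => i0 k • (f k ω - z ω)) cN := by
      refine Integrable.of_bound (measurable_from_nat).aestronglyMeasurable ‖x ω - z ω‖
        (Filter.Eventually.of_forall fun k => ?_)
      by_cases hk : k = 0
      · subst hk; simp [hi0, hf0]
      · simp [hi0, hk]
    have i3 : Integrable (fun k => t (ω, k) • (f k ω - z ω)) cN := by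
      refine Integrable.of_bound (measurable_from_nat).aestronglyMeasurable (1 + ‖x ω - z ω‖)
        (Filter.Eventually.of_forall fun k => ?_)
      have e : t (ω, k) • (f k ω - z ω) = t (ω, k) • (f k ω - x ω) + t (ω, k) • (x ω - z ω) := by
        rw [← smul_add]; congr 1; abel
      rw [e]
      refine (norm_add_le _ _).trans (add_le_add (norm_dk_smul_le _ _ _) ?_)
      rw [norm_smul, Real.norm_of_nonneg (htpos _).le]
      exact mul_le_of_le_one_left (norm_nonneg _) (htl _)
    have h5 : ∀ k, φ (ω, k) = (c0 + s ω * m ω)⁻¹ •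
        (i0 k • (f k ω - z ω) + t (ω, k) • (f k ω - z ω)) := by
      intro k
      simp only [hφ, hZ]
      rw [← add_smul, smul_smul]
    simp only [h5]
    rw [integral_smul, integral_add i4 i3, h3, h4, ← add_smul, smul_smul,
      inv_mul_cancel₀ (hden ω).ne', one_smul]
  obtain ⟨f1, f2, f3, f4, f5⟩ := wd_facts (E := EuclideanSpace ℝ (Fin d)) hZm hZpos hZi
  set μ := (Q.prod cN).withDensity fun a => ENNReal.ofReal (Z a) with hμ
  have hμ1 : μ ≪ P.prod cN := f2.trans (hQP.prod Measure.AbsolutelyContinuous.rfl)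
  have hμ2 : P.prod cN ≪ μ := (hPQ.prod Measure.AbsolutelyContinuous.rfl).trans f3
  have hU := @lemU (Ω × ℕ) Ω _ ℋ _ _ _ _ _ _ _ _ μ _ Prod.fst _ hX hY z hz ((f4 _).2 hφi) (by
    intro A hA
    have h2 : (Prod.fst ⁻¹' A : Set (Ω × ℕ)) = A ×ˢ Set.univ := by ext a; simp
    rw [f5 _ _ (measurable_fst (hℋ _ hA)), h2]
    change ∫ a in A ×ˢ Set.univ, φ a ∂(Q.prod cN) = 0
    rw [setIntegral_prod _ hφi.integrableOn]
    simp only [Measure.restrict_univ]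
    rw [← h0 A hA]
    exact setIntegral_congr_ae (hℋ _ hA) (hφint.mono fun ω h _ => h))
  have hU' := (ae_fst_iff hμ1 hμ2 (p := fun ω => NAm (@condDistrib (Ω × ℕ) Ω
      (EuclideanSpace ℝ (Fin d)) _ _ _ _ ℋ (fun x => f x.2 x.1) Prod.fst μ _ ω) (z ω))).1 hU
  have hsup := supp_lem (P := P) hℋ hκp hκm hκc hF hfm hfF hμ1 hμ2
  filter_upwards [hsup, hU'] with ω h1 h2
  exact (h1 _).1 h2

end BackStepPart

open MeasureTheory
open scoped Classical
set_option linter.unusedSectionVars false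
set_option linter.unusedSimpArgs false

section HConv
variable {E : Type*} [NormedAddCommGroup E] [InnerProductSpace ℝ E] [FiniteDimensional ℝ E]

lemma convex_ri {C : Set E} (hc : Convex ℝ C) : Convex ℝ (intrinsicInterior ℝ C) := by
  intro x hx y hy a b ha hb hab
  have hxC : x ∈ C := intrinsicInterior_subset hx
  have hyC : y ∈ C := intrinsicInterior_subset hy
  rcases ha.eq_or_lt with h0 | h0
  · have : b = 1 := by linarith
    subst this; rw [← h0]; simpa using hy
  refine mem_ri_of_NAs hc ⟨x, hxC⟩ ?_
  intro p hp c hcC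
  have e : ∀ v : E, inner ℝ p (v - (a • x + b • y))
      = inner ℝ p v - (a * inner ℝ p x + b * inner ℝ p y) := fun v => by
    rw [inner_sub_right, inner_add_right, inner_smul_right, inner_smul_right]
  simp only [e] at hp ⊢
  have h1 := hp x hxC
  have h2 := hp y hyC
  set X : ℝ := inner ℝ p x
  set Y : ℝ := inner ℝ p y
  have h3 : X = a * X + b * Y := by
    have hb' : b = 1 - a := by linarith
    have : a * (X - (a * X + b * Y)) + b * (Y - (a * X + b * Y)) = 0 := by subst hb'; ring
    have h4 : b * (Y - (a * X + b * Y)) ≤ 0 := mul_nonpos_of_nonneg_of_nonpos hb h2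
    have h5 : 0 ≤ a * (X - (a * X + b * Y)) := by linarith
    have h6 := nonneg_of_mul_nonneg_right h5 h0
    linarith
  have h7 := NAs_of_mem_ri hx p (fun v hv => by
    rw [inner_sub_right]; have := hp v hv; linarith) c hcC
  rw [inner_sub_right] at h7
  rw [← h3]; exact h7

lemma NAs_inter {G K : Set E} {x : E} (hx : x ∈ intrinsicInterior ℝ G)
    (hx' : x ∈ intrinsicInterior ℝ K) :
    NAs (intrinsicInterior ℝ G ∩ intrinsicInterior ℝ K) x := by
  refine NAs_of_ext fun y hy => ?_
  obtain ⟨e, he, h⟩ := ri_ext hx (intrinsicInterior_subset hy.1)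
  obtain ⟨e', he', h'⟩ := ri_ext hx' (intrinsicInterior_subset hy.2)
  have hm := lt_min he he'
  exact ⟨min e e', hm, h _ hm (min_le_left _ _), h' _ hm (min_le_right _ _)⟩

/-- generic chain construction -/
lemma exists_chain {X : Type*} (Good : ℕ → X → Prop) (Rel : ℕ → X → X → Prop)
    (h0 : ∃ z, Good 0 z) (hs : ∀ n z, Good n z → ∃ x, Good (n + 1) x ∧ Rel n z x) :
    ∃ x : ℕ → X, (∀ n, Good n (x n)) ∧ ∀ n, Rel n (x n) (x (n + 1)) := by
  choose f hf using hs
  obtain ⟨z0, hz0⟩ := h0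
  let c : ∀ n : ℕ, {z : X // Good n z} := fun n =>
    Nat.rec (motive := fun n => {z : X // Good n z}) ⟨z0, hz0⟩
      (fun n z => ⟨f n z.1 z.2, (hf n z.1 z.2).1⟩) n
  exact ⟨fun n => (c n).1, fun n => (c n).2, fun n => (hf n (c n).1 (c n).2).2⟩

end HConv

section HMeas
variable {d : ℕ}

lemma hitS_univ : (hitS (Set.univ) : Set (CL d)) = Set.univ := by
  ext D
  simp only [hitS, Set.mem_ofPred_eq, Set.inter_univ, Set.mem_univ, iff_true]
  exact D.2.2

lemma Kset_nonempty (m : Measure (CL d)) [IsProbabilityMeasure m] : (Kset m).Nonempty := by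
  rw [Set.nonempty_iff_ne_empty]
  intro h
  have h1 := (Kset_hit m isOpen_univ).1 (by rw [h]; simp)
  rw [hitS_univ] at h1
  simp at h1

lemma meas_Kset_hit {Ω : Type*} {ℋ : MeasurableSpace Ω} {κ : Ω → Measure (CL d)}
    (hκm : ∀ C, MeasurableSet C → Measurable[ℋ] fun ω => κ ω C)
    {V : Set (EuclideanSpace ℝ (Fin d))} (hV : IsOpen V) :
    MeasurableSet[ℋ] {ω | (Kset (κ ω) ∩ V).Nonempty} := by
  have h : {ω | (Kset (κ ω) ∩ V).Nonempty} = ((fun ω => κ ω (hitS V)) ⁻¹' {0})ᶜ := by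
    ext ω
    simp only [Set.mem_ofPred_eq, Set.mem_compl_iff, Set.mem_preimage, Set.mem_singleton_iff]
    rw [← Kset_hit _ hV, Set.nonempty_iff_ne_empty]
  rw [h]
  exact (hκm _ (meas_hitS hV) (measurableSet_singleton 0)).compl

lemma bundle_val {S : Set (EuclideanSpace ℝ (Fin d))} (h : IsClosed S) (h' : S.Nonempty) :
    (bundle S).1 = S := by
  have e : bundle S = ⟨S, h, h'⟩ := dif_pos ⟨h, h'⟩
  rw [e]

lemma bundle_val_empty : (bundle (∅ : Set (EuclideanSpace ℝ (Fin d)))).1 = Set.univ := by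
  have e : bundle (∅ : Set (EuclideanSpace ℝ (Fin d))) =
    ⟨Set.univ, isClosed_univ, Set.univ_nonempty⟩ := dif_neg (by simp)
  rw [e]

lemma meas_bundle_hit {Ω : Type*} {ℋ : MeasurableSpace Ω}
    {W : Ω → Set (EuclideanSpace ℝ (Fin d))} (hcl : ∀ ω, IsClosed (W ω))
    (hW : ∀ V : Set (EuclideanSpace ℝ (Fin d)), IsOpen V →
      MeasurableSet {ω | (W ω ∩ V).Nonempty})
    {V : Set (EuclideanSpace ℝ (Fin d))} (hV : IsOpen V) :
    MeasurableSet {ω | ((bundle (W ω)).1 ∩ V).Nonempty} := by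
  have h : {ω | ((bundle (W ω)).1 ∩ V).Nonempty} = {ω | (W ω ∩ V).Nonempty} ∪
      ({ω | (W ω ∩ Set.univ).Nonempty}ᶜ ∩ {_ω | V.Nonempty}) := by
    ext ω
    simp only [Set.mem_ofPred_eq, Set.mem_union, Set.mem_inter_iff, Set.mem_compl_iff,
      Set.inter_univ]
    rcases (W ω).eq_empty_or_nonempty with h | h
    · rw [h, bundle_val_empty]; simp
    · rw [bundle_val (hcl ω) h]; simp [h]
  rw [h]
  exact (hW V hV).union ((hW _ isOpen_univ).compl.inter (MeasurableSet.const _))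

end HMeas

/-- **Martingale selection theorem.** Let `(G n)_{n=0}^N` be an adapted sequence of
set-valued maps with nonempty relatively open convex values in `ℝ^d`. Define
`W N = cl (G N)` and, recursively, `W (n-1) = cl (G (n-1) ∩ ri (conv K(W n, ℱ (n-1))))`
when `W n ≠ ∅` a.s. (and `W (n-1) = ∅` otherwise), where `K(W n, ℱ (n-1); ω)` is the
support of the regular conditional upper distribution `Pstar n` of `W n` given
`ℱ (n-1)`. Then the martingale selection problem for `(G n)` is solvable iff
`W n ≠ ∅` a.s. for all `n < N`. -/
theorem martingale_selection_theorem
    {Ω : Type*} {mΩ : MeasurableSpace Ω} {P : Measure Ω} [IsProbabilityMeasure P]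
    [P.IsComplete] {d N : ℕ}
    (ℱ : ℕ → MeasurableSpace Ω) (hmono : Monotone ℱ) (hle : ∀ n, ℱ n ≤ mΩ)
    (G : ℕ → Ω → Set (EuclideanSpace ℝ (Fin d)))
    (hGne : ∀ n, n ≤ N → ∀ ω, (G n ω).Nonempty)
    (hGconv : ∀ n, n ≤ N → ∀ ω, Convex ℝ (G n ω))
    (hGrelopen : ∀ n, n ≤ N → ∀ ω, G n ω = intrinsicInterior ℝ (G n ω))
    (hGmeas : ∀ n, n ≤ N → ∀ V : Set (EuclideanSpace ℝ (Fin d)), IsOpen V →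
      MeasurableSet[ℱ n] {ω | (G n ω ∩ V).Nonempty})
    (W : ℕ → Ω → Set (EuclideanSpace ℝ (Fin d)))
    (hWN : ∀ ω, W N ω = closure (G N ω))
    -- `Pstar n` is a regular conditional distribution of `W n` (bundled as a random
    -- closed set) given `ℱ (n-1)`, for `1 ≤ n ≤ N`
    (Pstar : ℕ → Ω → Measure (CL d))
    (hPprob : ∀ n, 1 ≤ n → n ≤ N → ∀ ω, IsProbabilityMeasure (Pstar n ω))
    (hPmeas : ∀ n, 1 ≤ n → n ≤ N → ∀ C : Set (CL d), MeasurableSet C →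
      Measurable[ℱ (n - 1)] fun ω => Pstar n ω C)
    (hPcond : ∀ n, 1 ≤ n → n ≤ N → ∀ C : Set (CL d), MeasurableSet C →
      (fun ω => (Pstar n ω C).toReal) =ᵐ[P]
        P[fun ω => if bundle (W n ω) ∈ C then (1 : ℝ) else 0 | ℱ (n - 1)])
    -- the recursion defining `W (n-1)` from `W n`
    (hWrec : ∀ n, 1 ≤ n → n ≤ N →
      if ∀ᵐ ω ∂P, (W n ω).Nonempty then
        ∀ ω, W (n - 1) ω = closure (G (n - 1) ω ∩
          intrinsicInterior ℝ (convexHull ℝ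
            {y | ∀ ε > 0, 0 <
              Pstar n ω {D : CL d | (D.1 ∩ Metric.ball y ε).Nonempty}}))
      else ∀ ω, W (n - 1) ω = ∅) :
    (∃ (x : ℕ → Ω → EuclideanSpace ℝ (Fin d)) (Q : @Measure Ω mΩ),
        (∀ n, n ≤ N → Measurable[ℱ n] (x n)) ∧
        (∀ n, n ≤ N → ∀ᵐ ω ∂P, x n ω ∈ G n ω) ∧
        IsProbabilityMeasure Q ∧ Q ≪ P ∧ P ≪ Q ∧
        (∀ n, n ≤ N → Integrable (x n) Q) ∧
        (∀ n, 1 ≤ n → n ≤ N → x (n - 1) =ᵐ[Q] Q[x n | ℱ (n - 1)])) ↔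
      (∀ n, n < N → ∀ᵐ ω ∂P, (W n ω).Nonempty) := by
  -- restate the hypotheses without truncated subtraction
  have hPp : ∀ n, n < N → ∀ ω, IsProbabilityMeasure (Pstar (n + 1) ω) := fun n hn =>
    hPprob (n + 1) (by omega) (by omega)
  have hPm : ∀ n, n < N → ∀ C : Set (CL d), MeasurableSet C →
      Measurable[ℱ n] fun ω => Pstar (n + 1) ω C := fun n hn =>
    hPmeas (n + 1) (by omega) (by omega)
  have hPc : ∀ n, n < N → ∀ C : Set (CL d), MeasurableSet C →
      (fun ω => (Pstar (n + 1) ω C).toReal) =ᵐ[P]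
        P[fun ω => if bundle (W (n + 1) ω) ∈ C then (1 : ℝ) else 0 | ℱ n] := fun n hn =>
    hPcond (n + 1) (by omega) (by omega)
  have hWt : ∀ n, n < N → (∀ᵐ ω ∂P, (W (n + 1) ω).Nonempty) → ∀ ω, W n ω = closure (G n ω ∩
      intrinsicInterior ℝ (convexHull ℝ (Kset (Pstar (n + 1) ω)))) := fun n hn h => by
    have := hWrec (n + 1) (by omega) (by omega)
    rw [if_pos h] at this
    exact this
  have hWf : ∀ n, n < N → ¬ (∀ᵐ ω ∂P, (W (n + 1) ω).Nonempty) → ∀ ω, W n ω = ∅ :=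
    fun n hn h => by
    have := hWrec (n + 1) (by omega) (by omega)
    rw [if_neg h] at this
    exact this
  clear hPprob hPmeas hPcond hWrec
  have hWNne : ∀ᵐ ω ∂P, (W N ω).Nonempty := Filter.Eventually.of_forall fun ω => by
    rw [hWN]; exact (hGne N le_rfl ω).closure
  -- closedness and measurability of the maps `W n`
  have hWcl : ∀ n, n ≤ N → ∀ ω, IsClosed (W n ω) := fun n hn ω => by
    rcases hn.eq_or_lt with h | h
    · subst h; rw [hWN]; exact isClosed_closure
    · by_cases hw : ∀ᵐ ω ∂P, (W (n + 1) ω).Nonempty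
      · rw [hWt n h hw]; exact isClosed_closure
      · rw [hWf n h hw]; exact isClosed_empty
  have hWm : ∀ n, n ≤ N → ∀ V : Set (EuclideanSpace ℝ (Fin d)), IsOpen V →
      MeasurableSet[ℱ n] {ω | (W n ω ∩ V).Nonempty} := fun n hn V hV => by
    rcases hn.eq_or_lt with h | h
    · subst h
      simp only [hWN, closure_inter_open_nonempty_iff hV]
      exact hGmeas n le_rfl V hV
    · by_cases hw : ∀ᵐ ω ∂P, (W (n + 1) ω).Nonempty
      · simp only [hWt n h hw]
        exact @meas_W_hit Ω (ℱ n) _ _ _ _ _ _ _ _ (G n) (fun ω => Kset (Pstar (n + 1) ω))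
          (hGne n hn) (hGconv n hn) (hGrelopen n hn) (hGmeas n hn)
          (fun ω => by have := hPp n h ω; exact Kset_nonempty _)
          (fun V hV => meas_Kset_hit (hPm n h) hV) V hV
      · simp [hWf n h hw]
  have hBm : ∀ n, n ≤ N → ∀ V : Set (EuclideanSpace ℝ (Fin d)), IsOpen V →
      MeasurableSet[ℱ n] {ω | ((bundle (W n ω)).1 ∩ V).Nonempty} := fun n hn V hV =>
    @meas_bundle_hit d Ω (ℱ n) (W n) (hWcl n hn) (hWm n hn) V hV
  -- the sets before taking closures
  let R : ℕ → Ω → Set (EuclideanSpace ℝ (Fin d)) := fun n ω =>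
    if n = N then G n ω else
      G n ω ∩ intrinsicInterior ℝ (convexHull ℝ (Kset (Pstar (n + 1) ω)))
  have hRN : ∀ ω, R N ω = G N ω := fun ω => if_pos rfl
  have hRn : ∀ n, n < N → ∀ ω, R n ω =
      G n ω ∩ intrinsicInterior ℝ (convexHull ℝ (Kset (Pstar (n + 1) ω))) := fun n hn ω =>
    if_neg hn.ne
  have hRG : ∀ n, n ≤ N → ∀ ω, R n ω ⊆ G n ω := fun n hn ω => by
    rcases hn.eq_or_lt with h | h
    · subst h; rw [hRN]
    · rw [hRn n h]; exact Set.inter_subset_left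
  have hRc : ∀ n, n ≤ N → ∀ ω, Convex ℝ (R n ω) := fun n hn ω => by
    rcases hn.eq_or_lt with h | h
    · subst h; rw [hRN]; exact hGconv n hn ω
    · rw [hRn n h]; exact (hGconv n hn ω).inter (convex_ri (convex_convexHull ℝ _))
  have hRNA : ∀ n, n ≤ N → ∀ ω, ∀ x ∈ R n ω, NAs (R n ω) x := fun n hn ω x hx => by
    rcases hn.eq_or_lt with h | h
    · subst h; rw [hRN] at hx ⊢
      rw [hGrelopen n hn ω] at hx
      exact NAs_of_mem_ri hx
    · rw [hRn n h] at hx ⊢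
      rw [hGrelopen n hn ω] at hx ⊢
      exact NAs_inter hx.1 hx.2
  -- `W n` is the closure of `R n` provided `W (n+1)` is a.s. nonempty
  have hWR : ∀ n, n ≤ N → (n < N → ∀ᵐ ω ∂P, (W (n + 1) ω).Nonempty) →
      ∀ ω, W n ω = closure (R n ω) := fun n hn hw ω => by
    rcases hn.eq_or_lt with h | h
    · subst h; rw [hRN, hWN]
    · rw [hRn n h, hWt n h (hw h)]
  constructor
  · rintro ⟨x, Q, hxm, hxG, hQp, hQP, hPQ, hxi, hxM⟩
    have claim : ∀ k, k ≤ N → (∀ᵐ ω ∂P, (W (N - k) ω).Nonempty) ∧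
        (∀ᵐ ω ∂P, x (N - k) ω ∈ R (N - k) ω) ∧ ∀ ω, W (N - k) ω = closure (R (N - k) ω) := by
      intro k
      induction k with
      | zero =>
        intro _
        refine ⟨hWNne, ?_, hWR N le_rfl (fun h => absurd h (lt_irrefl _))⟩
        filter_upwards [hxG N le_rfl] with ω hω
        rw [Nat.sub_zero, hRN]; exact hω
      | succ k ih =>
        intro hk
        obtain ⟨hne, hxR, hcl⟩ := ih (by omega)
        obtain ⟨n, hn⟩ : ∃ n, n = N - (k + 1) := ⟨_, rfl⟩
        have hn1 : N - k = n + 1 := by omega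
        have hnN : n < N := by omega
        rw [hn1] at hne hxR hcl
        rw [← hn]
        have hb : ∀ᵐ ω ∂P, x (n + 1) ω ∈ (bundle (W (n + 1) ω)).1 ∧
            NAs (bundle (W (n + 1) ω)).1 (x (n + 1) ω) := by
          filter_upwards [hne, hxR] with ω h1 h2
          rw [bundle_val (hWcl _ hnN ω) h1, hcl ω]
          exact ⟨subset_closure h2, NAs_congr_of_closure closure_closure.symm
            (hRNA _ hnN ω _ h2)⟩
        have hK : ∀ᵐ ω ∂P, NAs (Kset (Pstar (n + 1) ω)) (x n ω) := by
          refine backward_step (hle n) (hPp n hnN) (hPm n hnN) (hPc n hnN)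
            (fun V hV => hle _ _ (hBm (n + 1) hnN V hV)) hQP hPQ
            ((hxm (n + 1) hnN).mono (hle _) le_rfl) (hxm n hnN.le)
            ((hxi _ hnN).sub (hxi n hnN.le)) ?_ (hb.mono fun _ h => h.1) (hb.mono fun _ h => h.2)
          intro A hA
          rw [integral_sub (hxi _ hnN).integrableOn (hxi n hnN.le).integrableOn, sub_eq_zero,
            ← setIntegral_condExp (hle n) (hxi _ hnN) hA]
          have := hxM (n + 1) (by omega) hnN
          exact (integral_congr_ae (ae_restrict_of_ae this)).symm
        have hxRn : ∀ᵐ ω ∂P, x n ω ∈ R n ω := by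
          filter_upwards [hK, hxG n hnN.le] with ω h1 h2
          rw [hRn n hnN]
          have := hPp n hnN ω
          exact ⟨h2, mem_ri_of_NAs (convex_convexHull ℝ _)
            (Kset_nonempty (Pstar (n + 1) ω)).convexHull (NAs_convexHull h1)⟩
        have hW' := hWR n hnN.le (fun _ => hne)
        refine ⟨?_, hxRn, hW'⟩
        filter_upwards [hxRn] with ω h
        rw [hW']
        exact ⟨_, subset_closure h⟩
    intro n hn
    have := (claim (N - n) (by omega)).1
    rwa [show N - (N - n) = n by omega] at this
  · intro hW
    have hWne : ∀ n, n ≤ N → ∀ᵐ ω ∂P, (W n ω).Nonempty := fun n hn => by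
      rcases hn.eq_or_lt with h | h
      · subst h; exact hWNne
      · exact hW n h
    have hWR' : ∀ n, n ≤ N → ∀ ω, W n ω = closure (R n ω) := fun n hn =>
      hWR n hn (fun h => hWne (n + 1) h)
    have hin : ∀ n, n ≤ N → ∀ z : Ω → EuclideanSpace ℝ (Fin d),
        (∀ ω, NAs (bundle (W n ω)).1 (z ω)) → ∀ᵐ ω ∂P, z ω ∈ R n ω := fun n hn z hz => by
      filter_upwards [hWne n hn] with ω hω
      have h1 := hz ω
      rw [bundle_val (hWcl n hn ω) hω, hWR' n hn] at h1
      rw [hWR' n hn] at hω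
      exact intrinsicInterior_subset (mem_ri_of_NAs (hRc n hn ω) (closure_nonempty_iff.1 hω)
        (NAs_congr_of_closure closure_closure h1))
    obtain ⟨x, hxg, hxr⟩ := exists_chain (X := Ω → EuclideanSpace ℝ (Fin d))
      (fun n z => n ≤ N → Measurable[ℱ n] z ∧ ∀ ω, NAs (bundle (W n ω)).1 (z ω))
      (fun n z x => n + 1 ≤ N → ∃ ρ : Measure Ω, IsFiniteMeasure ρ ∧ ρ ≪ P ∧ P ≪ ρ ∧
        Integrable (fun ω => x ω - z ω) ρ ∧
        ∀ A, MeasurableSet[ℱ n] A → ∫ ω in A, (x ω - z ω) ∂ρ = 0)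
      (by
        obtain ⟨z, hz, hz'⟩ := @bary_sel Ω (ℱ 0) _ _ _ _ _ _ _ _ (fun ω => (bundle (W 0 ω)).1)
          (fun ω => (bundle (W 0 ω)).2.1) (fun ω => (bundle (W 0 ω)).2.2) (hBm 0 (Nat.zero_le _))
        exact ⟨z, fun _ => ⟨hz, hz'⟩⟩)
      (by
        intro n z hz
        by_cases hn : n + 1 ≤ N
        · obtain ⟨hzm, hzN⟩ := hz (by omega)
          have hzK : ∀ᵐ ω ∂P, NAs (Kset (Pstar (n + 1) ω)) (z ω) := by
            filter_upwards [hin n (by omega) z hzN] with ω hω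
            rw [hRn n hn] at hω
            exact NAs_of_convexHull (NAs_of_mem_ri hω.2)
          obtain ⟨x, hx, hx', hρ⟩ := forward_step (P := P) (hmono (Nat.le_succ n)) (hle (n + 1))
            (hPp n hn) (hPm n hn) (hPc n hn) (hBm (n + 1) hn) hzm hzK
          exact ⟨x, fun _ => ⟨hx, hx'⟩, fun _ => hρ⟩
        · exact ⟨z, fun h => absurd h hn, fun h => absurd h hn⟩)
    obtain ⟨Q, hQp, hQP, hPQ, hQi, hQM⟩ := back_pass (P := P) ℱ hmono hle x
      (fun n hn => (hxg n hn).1) hxr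
    refine ⟨x, Q, fun n hn => (hxg n hn).1, fun n hn => ?_, hQp, hQP, hPQ, hQi, hQM⟩
    filter_upwards [hin n hn (x n) (hxg n hn).2] with ω hω
    exact hRG n hn ω hω
end
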